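/- arXiv:2509.03197 — 3 statements merged into one kernel-verified Lean document; each statement's English description precedes it below -/
import Mathlib

section
/- Fix s ∈ ℂ with Re s > 1. For w ∈ ℂ with Re w > 3/4 and w ≠ 1, the series F(w) := Σ_{n odd ≥ 1} χ₈(n) · L(w, χ⁽⁴ⁿ⁾) · a_{2w}(4n) · n^{−s} converges absolutely, and (w−1)·F(w) tends to (2/3)·ζ(2s)·(1−2^{−2s})·∏_{p>2 prime}(1 − 1/(p^{2s}(p+1))) as w → 1 within {w : Re w > 3/4, w ≠ 1}. -/
open Complex Filter Topology

noncomputable section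

/-- `a_t(m) = ∏_{p | m} (1 - p^{-t})^{-1}`. -/
def aF (t : ℂ) (m : ℕ) : ℂ := ∏ p ∈ m.primeFactors, (1 - (p : ℂ) ^ (-t))⁻¹

/-!
At nonsquare `n` the Pólya–Vinogradov inequality, through the squarefree part of `n`, bounds the
sums of `χ⁽⁴ⁿ⁾` by `O(n^{1/2+ε})`. Hence, for `n ≤ X` and `Re w > 3/4`, `L(w, χ⁽⁴ⁿ⁾)` is within
`O(1)` of its Dirichlet polynomial of length `X^{2/3}`. Quadratic reciprocity on residue classes
modulo `4` turns the polynomial into a sum over characters `(n | m)`, whose mean square over `n` is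
dominated by the pairs `m₁, m₂` with `m₁ m₂` a square. So the `L`-values at nonsquare `n` are
bounded in mean square, which gives absolute convergence.

At a square `n` the `L`-function is `ζ(w)` times a finite Euler product, and only these terms have a
pole at `w = 1`. For `w` near `1` the other `L`-values are `O(n^δ)` with `δ` small, so dominated
convergence turns the limit of `(w - 1) F(w)` into a Dirichlet series over odd `k` with `n = k²`,
which has an Euler product.
-/

/-! ### Gauss sums and the Pólya–Vinogradov inequality -/

section PolyaVinogradov

variable {N : ℕ} [NeZero N]

lemma norm_stdAddChar (x : ZMod N) : ‖ZMod.stdAddChar x‖ = 1 := by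
  rw [ZMod.stdAddChar_apply, Circle.norm_coe]

lemma norm_gaussSum_stdAddChar {χ : DirichletCharacter ℂ N} (hχ : χ.IsPrimitive) :
    ‖gaussSum χ ZMod.stdAddChar‖ = √N := by
  have dft_inv_one : ZMod.dft (⇑χ⁻¹) 1 = star (gaussSum χ ZMod.stdAddChar) := by
    rw [star_gaussSum_eq]
    simp only [gaussSum, ZMod.dft_apply, AddChar.inv_apply, mul_one, smul_eq_mul, mul_comm]
  have dft_eq : ZMod.dft (⇑χ) = fun k ↦ gaussSum χ ZMod.stdAddChar * χ⁻¹ (-k) :=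
    funext fun k ↦ by rw [hχ.fourierTransform_eq_inv_mul_gaussSum, mul_comm]
  have mul_star : gaussSum χ ZMod.stdAddChar * star (gaussSum χ ZMod.stdAddChar) = N := by
    have h := congrFun (ZMod.dft_dft (⇑χ)) (-1)
    simp only [dft_eq, ZMod.dft_const_mul, ZMod.dft_comp_neg] at h
    rwa [neg_neg, map_one, dft_inv_one, smul_eq_mul, mul_one] at h
  rw [← Real.sqrt_mul_self (norm_nonneg _)]
  congr 1
  simpa using congrArg norm mul_star

lemma two_mul_mul_one_sub_le_sin_pi_mul {x : ℝ} (h0 : 0 ≤ x) (h1 : x ≤ 1) :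
    2 * (x * (1 - x)) ≤ Real.sin (Real.pi * x) := by
  have on_left_half : ∀ y : ℝ, 0 ≤ y → y ≤ 1 / 2 → 2 * (y * (1 - y)) ≤ Real.sin (Real.pi * y) := by
    intro y hy0 hy
    have jordan := Real.mul_le_sin (x := Real.pi * y) (by positivity)
      (by nlinarith [Real.pi_pos])
    rw [← mul_assoc, div_mul_cancel₀ _ Real.pi_ne_zero] at jordan
    nlinarith
  rcases le_total x (1 / 2) with h | h
  · exact on_left_half x h0 h
  · have := on_left_half (1 - x) (by linarith) (by linarith)
    rw [mul_one_sub Real.pi, Real.sin_pi_sub] at this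
    linarith

lemma inv_norm_stdAddChar_natCast_sub_one_le {k : ℕ} (hk : 0 < k) (hkN : k < N) :
    ‖ZMod.stdAddChar (k : ZMod N) - 1‖⁻¹ ≤ N / 4 * ((k : ℝ)⁻¹ + ((N - k : ℕ) : ℝ)⁻¹) := by
  have : (0 : ℝ) < k := mod_cast hk
  have hN : (0 : ℝ) < N := mod_cast hk.trans hkN
  have hNk : (0 : ℝ) < N - k := sub_pos.2 (mod_cast hkN)
  have norm_eq : ‖ZMod.stdAddChar (k : ZMod N) - 1‖ = ‖2 * Real.sin (Real.pi * (k / N))‖ := by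
    have harg : 2 * Real.pi * I * (k : ℤ) / N = I * ((2 * (Real.pi * (k / N)) : ℝ) : ℂ) := by
      push_cast; ring
    rw [← Int.cast_natCast k, ZMod.stdAddChar_coe, harg, Complex.norm_exp_I_mul_ofReal_sub_one,
      mul_div_cancel_left₀ _ two_ne_zero]
  have hsin := two_mul_mul_one_sub_le_sin_pi_mul (x := k / N) (by positivity)
    ((div_le_one hN).2 (mod_cast hkN.le))
  have hcomp : 1 - (k / N : ℝ) = (N - k) / N := by field_simp
  rw [hcomp] at hsin
  calc ‖ZMod.stdAddChar (k : ZMod N) - 1‖⁻¹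
      ≤ (2 * (2 * (k / N * ((N - k) / N))) : ℝ)⁻¹ := by
        rw [norm_eq]
        gcongr
        exact (mul_le_mul_of_nonneg_left hsin zero_le_two).trans (Real.le_norm_self _)
    _ = N / 4 * ((k : ℝ)⁻¹ + ((N - k : ℕ) : ℝ)⁻¹) := by
        rw [Nat.cast_sub hkN.le]
        field_simp
        ring

lemma sum_erase_zero_zmod_eq_sum_Ico {M : Type*} [AddCommMonoid M] (f : ZMod N → M) :
    ∑ h ∈ Finset.univ.erase 0, f h = ∑ k ∈ Finset.Ico 1 N, f (k : ZMod N) := by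
  refine Finset.sum_nbij' ZMod.val (fun k ↦ (k : ZMod N)) (fun h hh ↦ ?_) (fun k hk ↦ ?_)
    (fun h _ ↦ ZMod.natCast_zmod_val h) (fun k hk ↦ ZMod.val_cast_of_lt (Finset.mem_Ico.1 hk).2)
    (fun h _ ↦ by rw [ZMod.natCast_zmod_val])
  · exact Finset.mem_Ico.2 ⟨Nat.one_le_iff_ne_zero.2
      ((ZMod.val_ne_zero h).2 (Finset.ne_of_mem_erase hh)), ZMod.val_lt h⟩
  · obtain ⟨hk1, hkN⟩ := Finset.mem_Ico.1 hk
    refine Finset.mem_erase.2 ⟨fun h0 ↦ ?_, Finset.mem_univ _⟩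
    exact Nat.not_dvd_of_pos_of_lt hk1 hkN ((ZMod.natCast_eq_zero_iff k N).1 h0)

lemma sum_inv_norm_stdAddChar_sub_one_le :
    ∑ h ∈ Finset.univ.erase (0 : ZMod N), ‖ZMod.stdAddChar h - 1‖⁻¹
      ≤ N / 2 * (1 + Real.log N) := by
  have sum_reflect : ∑ k ∈ Finset.Ico 1 N, ((N - k : ℕ) : ℝ)⁻¹ = ∑ k ∈ Finset.Ico 1 N, (k : ℝ)⁻¹ :=
    Finset.sum_nbij' (N - ·) (N - ·) (by grind) (by grind) (by grind) (by grind) (by grind)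
  have sum_le_log : ∑ k ∈ Finset.Ico 1 N, (k : ℝ)⁻¹ ≤ 1 + Real.log N := by
    refine le_trans ?_ (harmonic_le_one_add_log N)
    rw [harmonic_eq_sum_Icc, Rat.cast_sum]
    push_cast
    exact Finset.sum_le_sum_of_subset_of_nonneg Finset.Ico_subset_Icc_self
      fun _ _ _ ↦ by positivity
  calc ∑ h ∈ Finset.univ.erase (0 : ZMod N), ‖ZMod.stdAddChar h - 1‖⁻¹
      = ∑ k ∈ Finset.Ico 1 N, ‖ZMod.stdAddChar (k : ZMod N) - 1‖⁻¹ :=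
        sum_erase_zero_zmod_eq_sum_Ico _
    _ ≤ ∑ k ∈ Finset.Ico 1 N, N / 4 * ((k : ℝ)⁻¹ + ((N - k : ℕ) : ℝ)⁻¹) :=
        Finset.sum_le_sum fun k hk ↦ by
          rw [Finset.mem_Ico] at hk
          exact inv_norm_stdAddChar_natCast_sub_one_le hk.1 hk.2
    _ = N / 2 * ∑ k ∈ Finset.Ico 1 N, (k : ℝ)⁻¹ := by
        rw [← Finset.mul_sum, Finset.sum_add_distrib, sum_reflect]; ring
    _ ≤ N / 2 * (1 + Real.log N) := by gcongr

lemma norm_sum_range_stdAddChar_pow_le {h : ZMod N} (hh : h ≠ 0) (J : ℕ) :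
    ‖∑ j ∈ Finset.range J, ZMod.stdAddChar h ^ j‖ ≤ 2 * ‖ZMod.stdAddChar h - 1‖⁻¹ := by
  have ne_one : ZMod.stdAddChar h ≠ 1 := fun h1 ↦
    hh (ZMod.injective_stdAddChar (h1.trans (AddChar.map_zero_eq_one _).symm))
  rw [geom_sum_eq ne_one, norm_div, div_eq_mul_inv]
  gcongr
  refine (norm_sub_le _ _).trans (le_of_eq ?_)
  rw [norm_pow, norm_stdAddChar, norm_one]
  norm_num

lemma sum_range_inv_mul_gaussSum {χ : DirichletCharacter ℂ N} (hχ : χ.IsPrimitive) (hN : N ≠ 1)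
    (b : ZMod N) (J : ℕ) :
    (∑ j ∈ Finset.range J, χ⁻¹ (b + j)) * gaussSum χ ZMod.stdAddChar =
      ∑ h ∈ Finset.univ.erase 0,
        χ h * (ZMod.stdAddChar (b * h) * ∑ j ∈ Finset.range J, ZMod.stdAddChar h ^ j) := by
  have : Fact (1 < N) := ⟨Nat.one_lt_iff_ne_zero_and_ne_one.2 ⟨NeZero.ne N, hN⟩⟩
  rw [Finset.sum_erase _ (by rw [MulChar.map_zero, zero_mul]), Finset.sum_mul]
  simp_rw [← gaussSum_mulShift_of_isPrimitive ZMod.stdAddChar hχ, gaussSum,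
    AddChar.mulShift_apply, add_mul, AddChar.map_add_eq_mul, Finset.mul_sum]
  rw [Finset.sum_comm]
  simp only [← nsmul_eq_mul, AddChar.map_nsmul_eq_pow]

lemma norm_sum_range_inv_le {χ : DirichletCharacter ℂ N} (hχ : χ.IsPrimitive) (hN : N ≠ 1)
    (b : ZMod N) (J : ℕ) :
    ‖∑ j ∈ Finset.range J, χ⁻¹ (b + j)‖ ≤ √N * (1 + Real.log N) := by
  have hsqrt : 0 < √(N : ℝ) := Real.sqrt_pos.2 (mod_cast Nat.pos_of_neZero N)
  refine le_of_mul_le_mul_right ?_ hsqrt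
  calc ‖∑ j ∈ Finset.range J, χ⁻¹ (b + j)‖ * √N
      = ‖(∑ j ∈ Finset.range J, χ⁻¹ (b + j)) * gaussSum χ ZMod.stdAddChar‖ := by
        rw [norm_mul, norm_gaussSum_stdAddChar hχ]
    _ ≤ ∑ h ∈ Finset.univ.erase (0 : ZMod N), 2 * ‖ZMod.stdAddChar h - 1‖⁻¹ := by
        rw [sum_range_inv_mul_gaussSum hχ hN]
        refine norm_sum_le_of_le _ fun h hh ↦ ?_
        rw [norm_mul, norm_mul, norm_stdAddChar, one_mul]
        exact (mul_le_of_le_one_left (norm_nonneg _) (χ.norm_le_one h)).trans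
          (norm_sum_range_stdAddChar_pow_le (Finset.ne_of_mem_erase hh) J)
    _ ≤ 2 * (N / 2 * (1 + Real.log N)) := by
        rw [← Finset.mul_sum]
        gcongr
        exact sum_inv_norm_stdAddChar_sub_one_le
    _ = √N * (1 + Real.log N) * √N := by
        linear_combination -(1 + Real.log N) * Real.mul_self_sqrt (Nat.cast_nonneg (α := ℝ) N)

theorem polya_vinogradov {χ : DirichletCharacter ℂ N} (hχ : χ.IsPrimitive) (hN : N ≠ 1)
    (b : ZMod N) (c : (ZMod N)ˣ) (J : ℕ) :
    ‖∑ j ∈ Finset.range J, χ (b + c * j)‖ ≤ √N * (1 + Real.log N) := by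
  have factor (j : ℕ) : χ (b + c * j) = χ c * star (χ⁻¹ ((c⁻¹ : (ZMod N)ˣ) * b + j)) := by
    rw [MulChar.star_apply', inv_inv, ← map_mul, mul_add, Units.mul_inv_cancel_left]
  simp_rw [factor]
  rw [← Finset.mul_sum, ← star_sum, norm_mul, DirichletCharacter.unit_norm_eq_one, one_mul,
    norm_star]
  exact norm_sum_range_inv_le hχ hN _ J

end PolyaVinogradov

/-! ### The Jacobi symbol as a Dirichlet character -/

section JacobiCharacter

lemma jacobiSym_val_intCast (a : ℕ) [NeZero a] (x : ℤ) :
    jacobiSym ((x : ZMod a).val : ℤ) a = jacobiSym x a := by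
  rw [ZMod.val_intCast, ← jacobiSym.mod_left]

lemma jacobiSym_eq_zero_of_prime_dvd {x : ℤ} {n p : ℕ} [NeZero n] (hp : p.Prime)
    (hx : (p : ℤ) ∣ x) (hn : p ∣ n) : jacobiSym x n = 0 := by
  rw [jacobiSym.eq_zero_iff_not_coprime]
  intro hgcd
  have := hgcd ▸ Int.dvd_coe_gcd hx (Int.natCast_dvd_natCast.2 hn)
  exact hp.not_dvd_one (mod_cast this)

/-- The Jacobi symbol `(· | a)` as a Dirichlet character modulo `a`. -/
def jacobiChar (a : ℕ) [NeZero a] : DirichletCharacter ℂ a where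
  toFun x := jacobiSym x.val a
  map_one' := by simpa using congrArg (Int.cast : ℤ → ℂ) (jacobiSym_val_intCast a 1)
  map_mul' x y := by
    have h := jacobiSym_val_intCast a ((x.val : ℤ) * y.val)
    rw [Int.cast_mul, Int.cast_natCast, Int.cast_natCast, ZMod.natCast_zmod_val,
      ZMod.natCast_zmod_val] at h
    rw [h, jacobiSym.mul_left, Int.cast_mul]
  map_nonunit' x hx := by
    rw [Int.cast_eq_zero, jacobiSym.eq_zero_iff_not_coprime]
    exact fun h ↦ hx (by simpa using (ZMod.isUnit_iff_coprime x.val a).2 h)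

lemma jacobiChar_intCast (a : ℕ) [NeZero a] (x : ℤ) : jacobiChar a x = jacobiSym x a :=
  congrArg (Int.cast : ℤ → ℂ) (jacobiSym_val_intCast a x)

lemma jacobiChar_natCast (a : ℕ) [NeZero a] (x : ℕ) : jacobiChar a x = jacobiSym x a :=
  mod_cast jacobiChar_intCast a x

lemma exists_jacobiSym_eq_neg_one_modEq_one {p b : ℕ} (hp : p.Prime) (hp2 : p ≠ 2) (hb : b ≠ 0)
    (hpb : p.Coprime b) : ∃ x : ℕ, x ≡ 1 [MOD b] ∧ jacobiSym x (p * b) = -1 := by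
  have : Fact p.Prime := ⟨hp⟩
  obtain ⟨u, hu⟩ := quadraticChar_exists_neg_one (F := ZMod p) (by rwa [ZMod.ringChar_zmod_n])
  obtain ⟨x, hxp, hxb⟩ := Nat.chineseRemainder hpb u.val 1
  refine ⟨x, hxb, ?_⟩
  have at_p : jacobiSym x p = -1 := by
    rw [← jacobiSym.legendreSym.to_jacobiSym, legendreSym, Int.cast_natCast,
      (ZMod.natCast_eq_natCast_iff _ _ _).2 hxp, ZMod.natCast_zmod_val, hu]
  have at_b : jacobiSym x b = 1 := by
    rw [jacobiSym.mod_left' (Int.natCast_modEq_iff.2 hxb), Nat.cast_one, jacobiSym.one_left]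
  rw [jacobiSym.mul_right' _ hp.ne_zero hb, at_p, at_b, mul_one]

lemma isPrimitive_of_forall_prime {R : Type*} [CommMonoidWithZero R] {N : ℕ}
    [NeZero N] {χ : DirichletCharacter R N}
    (h : ∀ p b : ℕ, p.Prime → N = p * b → ∃ x : ℕ, x.Coprime N ∧ x ≡ 1 [MOD b] ∧ χ x ≠ 1) :
    χ.IsPrimitive := by
  by_contra hne
  have hdvd : χ.conductor ∣ N := χ.conductor_dvd_level
  obtain ⟨c, hc⟩ := hdvd
  have hc1 : c ≠ 1 := by
    rintro rfl
    exact hne (by rw [DirichletCharacter.isPrimitive_def]; lia)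
  obtain ⟨p, hp, q, rfl⟩ := Nat.exists_prime_and_dvd hc1
  obtain ⟨x, hxN, hx, hχx⟩ := h p (χ.conductor * q) hp (hc.trans (by ring))
  have hker := (DirichletCharacter.factorsThrough_iff_ker_unitsMap
    χ.conductor_dvd_level).1 χ.factorsThrough_conductor
  have hmem : ZMod.unitOfCoprime x hxN ∈ (ZMod.unitsMap χ.conductor_dvd_level).ker := by
    ext
    rw [ZMod.unitsMap_val, ZMod.coe_unitOfCoprime, Units.val_one,
      ZMod.cast_natCast χ.conductor_dvd_level, ← Nat.cast_one, ZMod.natCast_eq_natCast_iff]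
    exact hx.of_mul_right q
  exact hχx (by simpa using congrArg Units.val (hker hmem))

lemma jacobiChar_isPrimitive {a : ℕ} [NeZero a] (ha : Odd a) (hsq : Squarefree a) :
    (jacobiChar a).IsPrimitive := by
  refine isPrimitive_of_forall_prime fun p b hp hab ↦ ?_
  subst hab
  have hp2 : p ≠ 2 := by
    rintro rfl
    exact Nat.not_odd_iff_even.2 (even_two_mul b) ha
  obtain ⟨x, hx, hJ⟩ := exists_jacobiSym_eq_neg_one_modEq_one hp hp2 (right_ne_zero_of_mul
    hsq.ne_zero) (Nat.coprime_of_squarefree_mul hsq)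
  refine ⟨x, ?_, hx, ?_⟩
  · have hgcd := mt jacobiSym.eq_zero_iff_not_coprime.2 (hJ ▸ by decide : jacobiSym x (p * b) ≠ 0)
    exact not_not.1 hgcd
  · rw [jacobiChar_natCast, hJ]
    norm_num

end JacobiCharacter

/-! ### Jacobi symbols along arithmetic progressions -/

section Progressions

/-- The sums of `f` over finite arithmetic progressions with step coprime to `q` are at most `B`
in absolute value. -/
def ProgressionBound (f : ℤ → ℝ) (q : ℕ) (B : ℝ) : Prop :=
  ∀ b c : ℤ, IsCoprime c q → ∀ J : ℕ, |∑ j ∈ Finset.range J, f (b + c * j)| ≤ B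

lemma progressionBound_jacobiSym_of_squarefree {a : ℕ} (ha : Odd a) (hsq : Squarefree a)
    (ha1 : a ≠ 1) : ProgressionBound (jacobiSym · a) a (√a * (1 + Real.log a)) := by
  intro b c hc J
  have : NeZero a := ⟨hsq.ne_zero⟩
  have hcu : IsUnit (c : ZMod a) := (ZMod.coe_int_isUnit_iff_isCoprime c a).2 hc.symm
  have h := polya_vinogradov (jacobiChar_isPrimitive ha hsq) ha1 b hcu.unit J
  rw [IsUnit.unit_spec] at h
  rw [← Real.norm_eq_abs, ← Complex.norm_real]
  push_cast
  convert h using 4 with j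
  rw [← jacobiChar_intCast]
  push_cast
  rfl

lemma exists_forall_dvd_add_mul_iff {p : ℕ} (hp : 0 < p) (b : ℤ) {c : ℤ} (hc : IsCoprime c p) :
    ∃ r < p, ∀ j : ℕ, (p : ℤ) ∣ b + c * j ↔ j % p = r := by
  obtain ⟨u, v, huv⟩ := hc
  have hp' : (0 : ℤ) < p := mod_cast hp
  refine ⟨((-b * u) % p).toNat, by have := Int.emod_lt_of_pos (-b * u) hp'; lia, fun j ↦ ?_⟩
  have solve : (p : ℤ) ∣ b + c * j ↔ (-b * u) % p = (j : ℤ) % p := by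
    rw [← Int.ModEq, Int.modEq_iff_dvd]
    constructor <;> rintro ⟨k, hk⟩
    · exact ⟨u * k + j * v, by linear_combination u * hk - j * huv⟩
    · exact ⟨c * k + b * v, by linear_combination c * hk - b * huv⟩
  rw [solve]
  have := Int.emod_nonneg (-b * u) hp'.ne'
  lia

lemma sum_range_filter_mod_eq {M : Type*} [AddCommMonoid M] {p r : ℕ} (hr : r < p) (J : ℕ)
    (g : ℕ → M) :
    ∑ j ∈ Finset.range J with j % p = r, g j =
      ∑ i ∈ Finset.range ((J + (p - 1) - r) / p), g (r + p * i) := by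
  have hp : 0 < p := r.zero_le.trans_lt hr
  have lt_iff (i : ℕ) : i < (J + (p - 1) - r) / p ↔ r + p * i < J := by
    rw [← Nat.succ_le_iff, Nat.le_div_iff_mul_le hp, Nat.succ_mul, mul_comm i p]
    lia
  have mod_add (i : ℕ) : r + p * (i / p) = i ↔ i % p = r := by
    have := Nat.mod_add_div i p
    lia
  refine Finset.sum_nbij' (· / p) (fun i ↦ r + p * i) (fun j hj ↦ ?_) (fun i hi ↦ ?_)
    (fun j hj ↦ ?_) (fun i _ ↦ ?_) (fun j hj ↦ ?_)
  · obtain ⟨hjJ, hjr⟩ := Finset.mem_filter.1 hj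
    rwa [Finset.mem_range, lt_iff, (mod_add j).2 hjr, ← Finset.mem_range]
  · rw [Finset.mem_filter, Finset.mem_range, Nat.add_mul_mod_self_left, Nat.mod_eq_of_lt hr]
    exact ⟨(lt_iff i).1 (Finset.mem_range.1 hi), rfl⟩
  · exact (mod_add j).2 (Finset.mem_filter.1 hj).2
  · rw [Nat.add_mul_div_left _ _ hp, Nat.div_eq_of_lt hr, zero_add]
  · rw [(mod_add j).2 (Finset.mem_filter.1 hj).2]

lemma ProgressionBound.sieve {f : ℤ → ℝ} {q p : ℕ} {B : ℝ} (h : ProgressionBound f q B)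
    (hp : 0 < p) (hpq : p.Coprime q) :
    ProgressionBound (fun x ↦ if (p : ℤ) ∣ x then 0 else f x) (q * p) (2 * B) := by
  intro b c hc J
  rw [Nat.cast_mul, IsCoprime.mul_right_iff] at hc
  obtain ⟨r, hr, hdvd⟩ := exists_forall_dvd_add_mul_iff hp b hc.2
  have sub_progression : ∑ j ∈ Finset.range J, (if (p : ℤ) ∣ b + c * j then 0 else f (b + c * j)) =
      ∑ j ∈ Finset.range J, f (b + c * j) -
        ∑ i ∈ Finset.range ((J + (p - 1) - r) / p), f (b + c * r + c * p * i) := by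
    have reindex := sum_range_filter_mod_eq hr J fun j ↦ f (b + c * j)
    push_cast [mul_add, ← add_assoc, ← mul_assoc] at reindex
    rw [← reindex, Finset.sum_filter, ← Finset.sum_sub_distrib]
    simp_rw [hdvd]
    exact Finset.sum_congr rfl fun j _ ↦ by split_ifs <;> simp
  rw [sub_progression]
  calc _ ≤ B + B := (abs_sub _ _).trans (add_le_add (h b c hc.1 J)
        (h _ _ (hc.1.mul_left (Nat.isCoprime_iff_coprime.2 hpq)) _))
    _ = 2 * B := (two_mul B).symm

lemma ProgressionBound.nonneg {f : ℤ → ℝ} {q : ℕ} {B : ℝ} (h : ProgressionBound f q B) : 0 ≤ B :=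
  (abs_nonneg _).trans (h 0 1 isCoprime_one_left 0)

lemma jacobiSym_mul_prime_sq (x : ℤ) {n p : ℕ} (hn : n ≠ 0) (hp : p.Prime) :
    jacobiSym x (n * p ^ 2) = if (p : ℤ) ∣ x then 0 else jacobiSym x n := by
  have : NeZero p := ⟨hp.ne_zero⟩
  rw [jacobiSym.mul_right' _ hn (pow_ne_zero _ hp.ne_zero), jacobiSym.pow_right]
  split_ifs with h
  · rw [jacobiSym_eq_zero_of_prime_dvd hp h dvd_rfl, zero_pow two_ne_zero, mul_zero]
  · have hcop : IsCoprime x p :=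
      ((Nat.prime_iff_prime_int.1 hp).coprime_iff_not_dvd.2 h).symm
    rw [jacobiSym.sq_one (Int.isCoprime_iff_gcd_eq_one.1 hcop), mul_one]

lemma ProgressionBound.mul_prime_sq {n p : ℕ} {B : ℝ}
    (h : ProgressionBound (jacobiSym · n) n B) (hn : n ≠ 0) (hp : p.Prime) :
    ProgressionBound (jacobiSym · (n * p ^ 2)) (n * p ^ 2) (2 * B) := by
  intro b c hc J
  have : NeZero n := ⟨hn⟩
  have hcnp : IsCoprime c ((n * p : ℕ) : ℤ) := by
    push_cast [sq, ← mul_assoc] at hc ⊢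
    exact hc.of_mul_right_left
  by_cases hpn : p ∣ n
  · have drop_square (x : ℤ) : jacobiSym x (n * p ^ 2) = jacobiSym x n := by
      rw [jacobiSym_mul_prime_sq x hn hp]
      split_ifs with hx
      · exact (jacobiSym_eq_zero_of_prime_dvd hp hx hpn).symm
      · rfl
    simp only [drop_square]
    push_cast at hcnp
    linarith [h b c hcnp.of_mul_right_left J, h.nonneg]
  · have := h.sieve hp.pos (hp.coprime_iff_not_dvd.2 hpn) b c hcnp J
    simpa only [jacobiSym_mul_prime_sq _ hn hp, Int.cast_ite, Int.cast_zero] using this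

lemma progressionBound_jacobiSym_mul_sq {a : ℕ} (ha : Odd a) (hsq : Squarefree a) (ha1 : a ≠ 1)
    {k : ℕ} (hk : k ≠ 0) :
    ProgressionBound (jacobiSym · (a * k ^ 2)) (a * k ^ 2) (√a * (1 + Real.log a) * k) := by
  induction k using induction_on_primes with
  | zero => exact absurd rfl hk
  | one => simpa using progressionBound_jacobiSym_of_squarefree ha hsq ha1
  | prime_mul p m hp ih =>
    have hm : m ≠ 0 := right_ne_zero_of_mul hk
    have step := (ih hm).mul_prime_sq (mul_ne_zero hsq.ne_zero (pow_ne_zero _ hm)) hp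
    rw [show a * (p * m) ^ 2 = a * m ^ 2 * p ^ 2 by ring]
    intro b c hc J
    have hp2 : (2 : ℝ) ≤ p := mod_cast hp.two_le
    calc _ ≤ 2 * (√a * (1 + Real.log a) * m) := step b c hc J
      _ ≤ p * (√a * (1 + Real.log a) * m) := by
        have := Real.log_natCast_nonneg a
        gcongr
      _ = √a * (1 + Real.log a) * (p * m : ℕ) := by push_cast; ring

lemma sqrt_mul_one_add_log_mul_le {ε a k : ℝ} (hε : 0 < ε) (ha : 1 ≤ a) (hk : 1 ≤ k) :
    √a * (1 + Real.log a) * k ≤ (1 + 1 / ε) * (a * k ^ 2) ^ (1 / 2 + ε) := by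
  have split : (a * k ^ 2) ^ (1 / 2 + ε) = √a * k * (a ^ ε * (k ^ 2) ^ ε) := by
    rw [Real.rpow_add (by positivity), Real.mul_rpow (by positivity) (by positivity),
      Real.mul_rpow (by positivity) (by positivity), ← Real.sqrt_eq_rpow, ← Real.sqrt_eq_rpow,
      Real.sqrt_sq (by positivity)]
  have log_le : 1 + Real.log a ≤ (1 + 1 / ε) * a ^ ε := by
    have := Real.log_le_rpow_div (zero_le_one.trans ha) hε
    have := Real.one_le_rpow ha hε.le
    rw [add_mul, one_mul, one_div_mul_eq_div]
    linarith
  calc √a * (1 + Real.log a) * k = √a * k * (1 + Real.log a) := by ring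
    _ ≤ √a * k * ((1 + 1 / ε) * a ^ ε) := by gcongr
    _ ≤ √a * k * ((1 + 1 / ε) * a ^ ε) * (k ^ 2) ^ ε :=
      le_mul_of_one_le_right (by positivity) (Real.one_le_rpow (one_le_pow₀ hk) hε.le)
    _ = (1 + 1 / ε) * (a * k ^ 2) ^ (1 / 2 + ε) := by rw [split]; ring

lemma exists_squarefree_mul_sq_of_odd {n : ℕ} (hn : Odd n) (hsq : ¬ IsSquare n) :
    ∃ a k : ℕ, n = a * k ^ 2 ∧ Odd a ∧ Squarefree a ∧ a ≠ 1 ∧ k ≠ 0 := by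
  obtain ⟨a, k, rfl, ha⟩ := Nat.sq_mul_squarefree n
  refine ⟨a, k, mul_comm _ _, (Nat.odd_mul.1 hn).2, ha, ?_, ?_⟩
  · rintro rfl
    exact hsq ⟨k, by ring⟩
  · rintro rfl
    simp at hn

theorem progressionBound_jacobiSym {ε : ℝ} (hε : 0 < ε) {n : ℕ} (hn : Odd n)
    (hsq : ¬ IsSquare n) :
    ProgressionBound (jacobiSym · n) n ((1 + 1 / ε) * (n : ℝ) ^ (1 / 2 + ε)) := by
  obtain ⟨a, k, rfl, ha, hsqf, ha1, hk⟩ := exists_squarefree_mul_sq_of_odd hn hsq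
  intro b c hc J
  refine (progressionBound_jacobiSym_mul_sq ha hsqf ha1 hk b c hc J).trans ?_
  push_cast
  exact sqrt_mul_one_add_log_mul_le hε (mod_cast Nat.one_le_iff_ne_zero.2 hsqf.ne_zero)
    (mod_cast Nat.one_le_iff_ne_zero.2 hk)

end Progressions

/-! ### Truncating an L-series with bounded partial sums -/

section Truncation

open MeasureTheory Asymptotics

/-- The summatory function `t ↦ ∑_{1 ≤ k ≤ t} f k`. -/
def summatory (f : ℕ → ℂ) (t : ℝ) : ℂ := ∑ k ∈ Finset.Icc 1 ⌊t⌋₊, f k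

variable {f : ℕ → ℂ} {B : ℝ} {M : ℕ} {s w : ℂ}

lemma summatory_eq_zero (hf : ∀ k ∈ Finset.Icc 1 M, f k = 0) {t : ℝ} (ht : t < M + 1) :
    summatory f t = 0 := by
  have hfloor : ⌊t⌋₊ < M + 1 := (Nat.floor_lt' M.succ_ne_zero).2 (mod_cast ht)
  exact Finset.sum_eq_zero fun k hk ↦
    hf k (Finset.Icc_subset_Icc_right (Nat.lt_add_one_iff.1 hfloor) hk)

lemma measurable_summatory (f : ℕ → ℂ) : Measurable (summatory f) :=
  (measurable_from_nat (f := fun n ↦ ∑ k ∈ Finset.Icc 1 n, f k)).comp Nat.measurable_floor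

lemma locallyIntegrableOn_summatory (hB : ∀ t, ‖summatory f t‖ ≤ B) (U : Set ℝ) :
    LocallyIntegrableOn (summatory f) U :=
  ((locallyIntegrable_const B).mono (measurable_summatory f).aestronglyMeasurable
    (.of_forall fun t ↦ (hB t).trans (Real.le_norm_self B))).locallyIntegrableOn U

lemma mellin_summatory_eq_integral_Ioi (hf : ∀ k ∈ Finset.Icc 1 M, f k = 0) (s : ℂ) :
    mellin (summatory f) s = ∫ t in Set.Ioi (M + 1 : ℝ), (t : ℂ) ^ (s - 1) • summatory f t := by
  rw [mellin, ← integral_Ici_eq_integral_Ioi (x := (M + 1 : ℝ))]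
  refine setIntegral_eq_of_subset_of_forall_sdiff_eq_zero measurableSet_Ioi
    (Set.Ici_subset_Ioi.2 (by positivity)) fun t ht ↦ ?_
  rw [summatory_eq_zero hf (not_le.1 ht.2), smul_zero]

lemma LSeries_eq_mul_mellin_summatory (hB : ∀ t, ‖summatory f t‖ ≤ B) (hs : 0 < s.re)
    (hsum : LSeriesSummable f s) : LSeries f s = s * mellin (summatory f) (-s) := by
  have hO : (fun n : ℕ ↦ ∑ k ∈ Finset.Icc 1 n, f k) =O[atTop] fun n : ℕ ↦ (n : ℝ) ^ (0 : ℝ) := by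
    refine IsBigO.of_bound B (.of_forall fun n ↦ ?_)
    simpa [summatory] using hB n
  rw [LSeries_eq_mul_integral f le_rfl hs hsum hO,
    mellin_summatory_eq_integral_Ioi (M := 0) (by simp), Nat.cast_zero, zero_add]
  simp only [summatory, smul_eq_mul, mul_comm, neg_add']

lemma differentiableAt_mellin_summatory (hB : ∀ t, ‖summatory f t‖ ≤ B) (hs : s.re < 0) :
    DifferentiableAt ℂ (mellin (summatory f)) s := by
  have at_top : summatory f =O[atTop] (· ^ (-0 : ℝ)) :=
    IsBigO.of_bound B (.of_forall fun t ↦ by simpa using hB t)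
  have at_zero : summatory f =O[𝓝[>] 0] (· ^ (-(s.re - 1))) := by
    refine (isBigO_zero _ _).congr' ?_ .rfl
    filter_upwards [nhdsWithin_le_nhds (Iio_mem_nhds zero_lt_one)] with t ht
    exact (summatory_eq_zero (M := 0) (by simp) (by simpa using ht)).symm
  exact mellin_differentiableAt_of_isBigO_rpow (locallyIntegrableOn_summatory hB _) at_top hs
    at_zero (sub_one_lt _)

lemma norm_mellin_summatory_le (hf : ∀ k ∈ Finset.Icc 1 M, f k = 0) (hB : ∀ t, ‖summatory f t‖ ≤ B)
    (hs : s.re < 0) : ‖mellin (summatory f) s‖ ≤ B * ((M + 1 : ℝ) ^ s.re / -s.re) := by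
  have hM : (0 : ℝ) < M + 1 := by positivity
  have hs' : s.re - 1 < -1 := by linarith
  calc ‖mellin (summatory f) s‖ ≤ ∫ t in Set.Ioi (M + 1 : ℝ), B * t ^ (s.re - 1) := by
        rw [mellin_summatory_eq_integral_Ioi hf]
        refine norm_integral_le_of_norm_le ((integrableOn_Ioi_rpow_of_lt hs' hM).const_mul B) ?_
        filter_upwards [ae_restrict_mem measurableSet_Ioi] with t ht
        rw [norm_smul, Complex.norm_cpow_eq_rpow_re_of_pos (hM.trans ht), sub_re, one_re, mul_comm]
        exact mul_le_mul_of_nonneg_right (hB t) (Real.rpow_nonneg (hM.trans ht).le _)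
    _ = B * ((M + 1 : ℝ) ^ s.re / -s.re) := by
        rw [integral_const_mul, integral_Ioi_rpow_of_lt hs' hM, sub_add_cancel, neg_div,
          div_neg]

lemma norm_le_of_eq_LSeries {g : ℂ → ℂ} (hg : DifferentiableOn ℂ g {z | 0 < z.re})
    (hgf : ∀ z : ℂ, 1 < z.re → g z = LSeries f z) (hsum : ∀ z : ℂ, 1 < z.re → LSeriesSummable f z)
    (hf : ∀ k ∈ Finset.Icc 1 M, f k = 0) (hB : ∀ t, ‖summatory f t‖ ≤ B) (hw : 0 < w.re) :
    ‖g w‖ ≤ B * (‖w‖ / w.re) * (M + 1 : ℝ) ^ (-w.re) := by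
  have hopen : IsOpen {z : ℂ | 0 < z.re} := isOpen_lt continuous_const continuous_re
  have mellin_diff : DifferentiableOn ℂ (fun z ↦ z * mellin (summatory f) (-z)) {z | 0 < z.re} := by
    intro z hz
    have := differentiableAt_mellin_summatory hB (s := -z) (by simpa using hz)
    exact (differentiableAt_id.mul
      (this.comp z differentiable_neg.differentiableAt)).differentiableWithinAt
  have eq_near_two : g =ᶠ[𝓝 2] fun z ↦ z * mellin (summatory f) (-z) := by
    filter_upwards [(isOpen_lt continuous_const continuous_re).mem_nhds
      (show (2 : ℂ) ∈ {z : ℂ | 1 < z.re} by simp)] with z hz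
    rw [hgf z hz, LSeries_eq_mul_mellin_summatory hB (zero_lt_one.trans hz) (hsum z hz)]
  have g_eq := (hg.analyticOnNhd hopen).eqOn_of_preconnected_of_eventuallyEq
    (mellin_diff.analyticOnNhd hopen) (convex_halfSpace_re_gt 0).isPreconnected
    (by simp : (2 : ℂ) ∈ {z : ℂ | 0 < z.re}) eq_near_two hw
  have hmellin := norm_mellin_summatory_le hf hB (s := -w) (by simpa using hw)
  rw [neg_re, neg_neg] at hmellin
  rw [g_eq, norm_mul]
  calc ‖w‖ * ‖mellin (summatory f) (-w)‖ ≤ ‖w‖ * (B * ((M + 1 : ℝ) ^ (-w.re) / w.re)) := by gcongr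
    _ = B * (‖w‖ / w.re) * (M + 1 : ℝ) ^ (-w.re) := by ring

variable {N : ℕ} {χ : DirichletCharacter ℂ N}

/-- The coefficients of `L(·, χ)` with the terms of index at most `M` removed. -/
def tailCoeff (χ : DirichletCharacter ℂ N) (M k : ℕ) : ℂ := if k ≤ M then 0 else χ k

lemma norm_summatory_tailCoeff_le (hB : ∀ n : ℕ, ‖∑ k ∈ Finset.Icc 1 n, χ k‖ ≤ B) (M : ℕ) (t : ℝ) :
    ‖summatory (tailCoeff χ M) t‖ ≤ 2 * B := by
  have split : summatory (tailCoeff χ M) t =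
      ∑ k ∈ Finset.Icc 1 ⌊t⌋₊, χ k - ∑ k ∈ Finset.Icc 1 (min ⌊t⌋₊ M), χ k := by
    have hfilter : Finset.Icc 1 (min ⌊t⌋₊ M) = {k ∈ Finset.Icc 1 ⌊t⌋₊ | k ≤ M} := by grind
    rw [hfilter, Finset.sum_filter, ← Finset.sum_sub_distrib]
    exact Finset.sum_congr rfl fun k _ ↦ by unfold tailCoeff; split_ifs <;> simp
  rw [split, two_mul]
  exact (norm_sub_le _ _).trans (add_le_add (hB _) (hB _))

lemma LSeriesSummable_tailCoeff (χ : DirichletCharacter ℂ N) (M : ℕ) (hs : 1 < s.re) :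
    LSeriesSummable (tailCoeff χ M) s := by
  refine LSeriesSummable_of_bounded_of_one_lt_re (m := 1) (fun k _ ↦ ?_) hs
  unfold tailCoeff
  split_ifs
  · simp
  · exact χ.norm_le_one _

variable [NeZero N]

lemma LFunction_sub_sum_Icc_eq_LSeries_tailCoeff (χ : DirichletCharacter ℂ N) (M : ℕ)
    (hs : 1 < s.re) :
    χ.LFunction s - ∑ k ∈ Finset.Icc 1 M, χ k * (k : ℂ) ^ (-s) = LSeries (tailCoeff χ M) s := by
  have term_eq (k : ℕ) : LSeries.term (χ ·) s k - (if k ∈ Finset.Icc 1 M then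
      χ k * (k : ℂ) ^ (-s) else 0) = LSeries.term (tailCoeff χ M) s k := by
    rcases eq_or_ne k 0 with rfl | hk
    · simp
    · rw [LSeries.term_of_ne_zero hk, LSeries.term_of_ne_zero hk, tailCoeff, cpow_neg,
        ← div_eq_mul_inv]
      have : 1 ≤ k := Nat.one_le_iff_ne_zero.2 hk
      split_ifs <;> grind
  have head := hasSum_sum_of_ne_finset_zero (L := .unconditional ℕ) (s := Finset.Icc 1 M)
    (f := fun k : ℕ ↦ if k ∈ Finset.Icc 1 M then χ k * (k : ℂ) ^ (-s) else 0)
    (fun k hk ↦ if_neg hk)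
  rw [Finset.sum_ite_mem, Finset.inter_self] at head
  have full := (DirichletCharacter.LSeriesSummable_of_one_lt_re χ hs).hasSum
  rw [DirichletCharacter.LFunction_eq_LSeries χ hs]
  exact ((full.sub head).congr_fun fun k ↦ (term_eq k).symm).tsum_eq.symm

theorem norm_LFunction_sub_sum_Icc_le (hχ : χ ≠ 1)
    (hB : ∀ n : ℕ, ‖∑ k ∈ Finset.Icc 1 n, χ k‖ ≤ B) (M : ℕ) (hw : 0 < w.re) :
    ‖χ.LFunction w - ∑ k ∈ Finset.Icc 1 M, χ k * (k : ℂ) ^ (-w)‖ ≤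
      2 * B * (‖w‖ / w.re) * (M + 1 : ℝ) ^ (-w.re) := by
  refine norm_le_of_eq_LSeries (g := fun w ↦ χ.LFunction w - ∑ k ∈ Finset.Icc 1 M,
    χ k * (k : ℂ) ^ (-w)) (DifferentiableOn.sub
      (DirichletCharacter.differentiable_LFunction hχ).differentiableOn
      (DifferentiableOn.fun_sum fun k hk ↦ ?_))
    (fun z hz ↦ LFunction_sub_sum_Icc_eq_LSeries_tailCoeff χ M hz)
    (fun z hz ↦ LSeriesSummable_tailCoeff χ M hz) (fun k hk ↦ if_pos (Finset.mem_Icc.1 hk).2)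
    (norm_summatory_tailCoeff_le hB M) hw
  have hk0 : (k : ℂ) ≠ 0 := Nat.cast_ne_zero.2 (Nat.one_le_iff_ne_zero.1 (Finset.mem_Icc.1 hk).1)
  exact ((differentiable_neg.const_cpow (.inl hk0)).const_mul _).differentiableOn

end Truncation

/-! ### Mean squares of Jacobi symbol sums -/

section MeanSquare

lemma sum_Icc_rpow_sub_one_le {β : ℝ} (hβ : 0 < β) (hβ1 : β ≤ 1) (M : ℕ) :
    ∑ i ∈ Finset.Icc 1 M, (i : ℝ) ^ (β - 1) ≤ (M : ℝ) ^ β / β := by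
  induction M with
  | zero => simp only [Finset.Icc_eq_empty_of_lt one_pos, Finset.sum_empty]; positivity
  | succ M ih =>
    have hM : (0 : ℝ) < (M + 1 : ℕ) := by positivity
    have bernoulli : ((M : ℝ) / (M + 1 : ℕ)) ^ β ≤ 1 + β * (-1 / (M + 1 : ℕ)) := by
      have hs : -1 ≤ -1 / ((M + 1 : ℕ) : ℝ) := by
        rw [neg_div, neg_le_neg_iff, div_le_one hM]
        simp
      convert rpow_one_add_le_one_add_mul_self hs hβ.le hβ1 using 2
      field_simp
      push_cast
      ring
    have increment : β * ((M + 1 : ℕ) : ℝ) ^ (β - 1) ≤ ((M + 1 : ℕ) : ℝ) ^ β - (M : ℝ) ^ β := by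
      rw [Real.div_rpow M.cast_nonneg hM.le, div_le_iff₀ (by positivity)] at bernoulli
      rw [Real.rpow_sub_one hM.ne']
      linear_combination bernoulli
    rw [Finset.sum_Icc_succ_top (by lia)]
    rw [le_div_iff₀ hβ] at ih ⊢
    linarith

lemma exists_eq_mul_sq_of_isSquare_mul {m n : ℕ} (hm : m ≠ 0) (h : IsSquare (m * n)) :
    ∃ g a b : ℕ, m = g * a ^ 2 ∧ n = g * b ^ 2 := by
  obtain ⟨g, m', n', hg, hcop, rfl, rfl⟩ :=
    Nat.exists_coprime' (Nat.gcd_pos_of_pos_left n (Nat.pos_of_ne_zero hm))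
  obtain ⟨k, hk⟩ := h
  obtain ⟨l, rfl⟩ : g ∣ k := by
    rw [← Nat.pow_dvd_pow_iff two_ne_zero]
    exact ⟨m' * n', by rw [sq k, ← hk]; ring⟩
  have hl : m' * n' = l ^ 2 :=
    Nat.eq_of_mul_eq_mul_left (pow_pos hg 2) (by linear_combination hk)
  obtain ⟨a, rfl⟩ : ∃ a, a ^ 2 = m' := by
    simpa only [associated_iff_eq] using
      exists_associated_pow_of_mul_eq_pow (Nat.isUnit_iff.2 hcop) hl
  obtain ⟨b, rfl⟩ : ∃ b, b ^ 2 = n' := by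
    simpa only [associated_iff_eq] using
      exists_associated_pow_of_mul_eq_pow (Nat.isUnit_iff.2 hcop.symm) ((mul_comm _ _).trans hl)
  exact ⟨g, a, b, mul_comm _ _, mul_comm _ _⟩

lemma sum_mul_mul_le_tsum_pow_three {ι : Type*} {u : ι → ℝ} (hu : ∀ i, 0 ≤ u i) (hs : Summable u)
    (T : Finset (ι × ι × ι)) :
    ∑ q ∈ T, u q.1 * (u q.2.1 * u q.2.2) ≤ (∑' i, u i) ^ 3 := by
  have hu2 (q : ι × ι) : 0 ≤ u q.1 * u q.2 := mul_nonneg (hu _) (hu _)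
  have hs2 : Summable fun q : ι × ι ↦ u q.1 * u q.2 := hs.mul_of_nonneg hs hu hu
  have hs3 : Summable fun q : ι × ι × ι ↦ u q.1 * (u q.2.1 * u q.2.2) :=
    hs.mul_of_nonneg hs2 hu hu2
  calc _ ≤ ∑' q : ι × ι × ι, u q.1 * (u q.2.1 * u q.2.2) :=
        hs3.sum_le_tsum T fun q _ ↦ mul_nonneg (hu _) (hu2 _)
    _ = (∑' i, u i) * ((∑' i, u i) * ∑' i, u i) := by
      rw [hs.tsum_mul_tsum hs hs2, hs.tsum_mul_tsum hs2 hs3]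
    _ = (∑' i, u i) ^ 3 := by ring

lemma mul_sq_rpow_mul_mul_sq_rpow {g a b : ℝ} (hg : 0 ≤ g) (ha : 0 ≤ a) (hb : 0 ≤ b) (t : ℝ) :
    (g * a ^ 2) ^ t * (g * b ^ 2) ^ t
      = g ^ (2 * t) * (a ^ (2 * t) * b ^ (2 * t)) := by
  have sq_rpow {x : ℝ} (hx : 0 ≤ x) : x ^ (2 * t) = (x ^ 2) ^ t := by
    rw [Real.rpow_mul hx, Real.rpow_two]
  rw [sq_rpow hg, sq_rpow ha, sq_rpow hb, Real.mul_rpow hg (sq_nonneg a),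
    Real.mul_rpow hg (sq_nonneg b), sq g, Real.mul_rpow hg hg]
  ring

lemma sum_rpow_mul_rpow_le_of_isSquare {α : ℝ} (hα : 1 / 2 < α) {S : Finset (ℕ × ℕ)}
    (hS : ∀ p ∈ S, p.1 ≠ 0 ∧ IsSquare (p.1 * p.2)) :
    ∑ p ∈ S, (p.1 : ℝ) ^ (-α) * (p.2 : ℝ) ^ (-α) ≤ (∑' k : ℕ, (k : ℝ) ^ (2 * -α)) ^ 3 := by
  have hex (p : ℕ × ℕ) : ∃ q : ℕ × ℕ × ℕ, p ∈ S → p = (q.1 * q.2.1 ^ 2, q.1 * q.2.2 ^ 2) := by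
    by_cases hp : p ∈ S
    · obtain ⟨g, a, b, h1, h2⟩ := exists_eq_mul_sq_of_isSquare_mul (hS p hp).1 (hS p hp).2
      exact ⟨(g, a, b), fun _ ↦ Prod.ext h1 h2⟩
    · exact ⟨0, fun h ↦ absurd h hp⟩
  choose φ hφ using hex
  have hinj : Set.InjOn φ S := fun p hp q hq h ↦ by rw [hφ p hp, hφ q hq, h]
  have hsum : Summable fun k : ℕ ↦ (k : ℝ) ^ (2 * -α) := Real.summable_nat_rpow.2 (by linarith)
  refine le_of_eq_of_le ?_
    (sum_mul_mul_le_tsum_pow_three (fun k ↦ by positivity) hsum (S.image φ))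
  rw [Finset.sum_image hinj]
  refine Finset.sum_congr rfl fun p hp ↦ ?_
  rw [← mul_sq_rpow_mul_mul_sq_rpow (by positivity) (by positivity) (by positivity)]
  conv_lhs => rw [hφ p hp]
  push_cast
  rfl

lemma abs_jacobiSym_le_one (x : ℤ) (n : ℕ) : |(jacobiSym x n : ℝ)| ≤ 1 := by
  rcases jacobiSym.trichotomy x n with h | h | h <;> simp [h]

lemma abs_sum_jacobiSym_le (f : ℕ → ℤ) (n J : ℕ) :
    |∑ j ∈ Finset.range J, (jacobiSym (f j) n : ℝ)| ≤ J := by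
  calc _ ≤ ∑ j ∈ Finset.range J, |(jacobiSym (f j) n : ℝ)| := Finset.abs_sum_le_sum_abs _ _
    _ ≤ ∑ _j ∈ Finset.range J, 1 := Finset.sum_le_sum fun j _ ↦ abs_jacobiSym_le_one _ n
    _ = J := by simp

lemma norm_sum_mul_jacobiSym_sq {S : Finset ℕ} (hS : ∀ m ∈ S, m ≠ 0) (a : ℕ → ℂ) (x : ℤ) :
    ((‖∑ m ∈ S, a m * jacobiSym x m‖ ^ 2 : ℝ) : ℂ)
      = ∑ p ∈ S ×ˢ S, a p.1 * (starRingEnd ℂ) (a p.2) * jacobiSym x (p.1 * p.2) := by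
  rw [ofReal_pow, ← mul_conj', map_sum, Finset.sum_mul_sum, ← Finset.sum_product']
  refine Finset.sum_congr rfl fun p hp ↦ ?_
  obtain ⟨h1, h2⟩ := Finset.mem_product.1 hp
  rw [jacobiSym.mul_right' _ (hS _ h1) (hS _ h2)]
  simp only [map_mul, Int.cast_mul, map_intCast]
  ring

lemma sum_norm_sq_le_sum_product {S : Finset ℕ} (hS : ∀ m ∈ S, m ≠ 0) (a : ℕ → ℂ) (f : ℕ → ℤ)
    (J : ℕ) :
    ∑ j ∈ Finset.range J, ‖∑ m ∈ S, a m * jacobiSym (f j) m‖ ^ 2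
      ≤ ∑ p ∈ S ×ˢ S, ‖a p.1‖ * ‖a p.2‖ *
        |∑ j ∈ Finset.range J, (jacobiSym (f j) (p.1 * p.2) : ℝ)| := by
  have hexp : ((∑ j ∈ Finset.range J, ‖∑ m ∈ S, a m * jacobiSym (f j) m‖ ^ 2 : ℝ) : ℂ)
      = ∑ p ∈ S ×ˢ S, a p.1 * (starRingEnd ℂ) (a p.2) *
        (∑ j ∈ Finset.range J, (jacobiSym (f j) (p.1 * p.2) : ℝ) : ℝ) := by
    simp only [ofReal_sum, norm_sum_mul_jacobiSym_sq hS, Finset.mul_sum, ofReal_intCast]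
    exact Finset.sum_comm
  have hnonneg : 0 ≤ ∑ j ∈ Finset.range J, ‖∑ m ∈ S, a m * jacobiSym (f j) m‖ ^ 2 := by positivity
  rw [← Real.norm_of_nonneg hnonneg, ← norm_real, hexp]
  refine (norm_sum_le _ _).trans (Finset.sum_le_sum fun p _ ↦ ?_)
  rw [norm_mul, norm_mul, RCLike.norm_conj, norm_real, Real.norm_eq_abs]

lemma sum_norm_sq_jacobiSym_le_diagonal_add {ε : ℝ} (hε : 0 < ε) {S : Finset ℕ} {c : ℤ}
    (hS : ∀ m ∈ S, Odd m ∧ IsCoprime c m) (a : ℕ → ℂ) (b : ℤ) (J : ℕ) :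
    ∑ j ∈ Finset.range J, ‖∑ m ∈ S, a m * jacobiSym (b + c * j) m‖ ^ 2
      ≤ J * ∑ p ∈ S ×ˢ S with IsSquare (p.1 * p.2), ‖a p.1‖ * ‖a p.2‖
        + (1 + 1 / ε) * (∑ m ∈ S, ‖a m‖ * (m : ℝ) ^ (1 / 2 + ε)) ^ 2 := by
  refine (sum_norm_sq_le_sum_product (fun m hm ↦ (hS m hm).1.pos.ne') a _ J).trans ?_
  rw [sq, Finset.sum_mul_sum, ← Finset.sum_product', Finset.mul_sum, Finset.mul_sum,
    Finset.sum_filter, ← Finset.sum_add_distrib]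
  refine Finset.sum_le_sum fun p hp ↦ ?_
  obtain ⟨h1, h2⟩ := Finset.mem_product.1 hp
  have off_nonneg : 0 ≤ (1 + 1 / ε) * (‖a p.1‖ * (p.1 : ℝ) ^ (1 / 2 + ε) *
      (‖a p.2‖ * (p.2 : ℝ) ^ (1 / 2 + ε))) := by positivity
  split_ifs with hsq
  · refine le_add_of_le_of_nonneg ?_ off_nonneg
    rw [mul_comm (J : ℝ)]
    gcongr
    exact abs_sum_jacobiSym_le _ _ J
  · have hcop : IsCoprime c ((p.1 * p.2 : ℕ) : ℤ) := by
      push_cast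
      exact (hS _ h1).2.mul_right (hS _ h2).2
    have hpv := progressionBound_jacobiSym hε ((hS _ h1).1.mul (hS _ h2).1) hsq b c hcop J
    push_cast at hpv
    rw [Real.mul_rpow (by positivity) (by positivity)] at hpv
    rw [zero_add]
    refine (mul_le_mul_of_nonneg_left hpv (by positivity)).trans_eq ?_
    ring

lemma sum_norm_mul_norm_le_of_isSquare {α : ℝ} (hα : 1 / 2 < α) {a : ℕ → ℂ} {S : Finset ℕ}
    (hS : ∀ m ∈ S, 1 ≤ m) (ha : ∀ m ∈ S, ‖a m‖ ≤ (m : ℝ) ^ (-α)) :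
    ∑ p ∈ S ×ˢ S with IsSquare (p.1 * p.2), ‖a p.1‖ * ‖a p.2‖
      ≤ (∑' k : ℕ, (k : ℝ) ^ (2 * -α)) ^ 3 := by
  refine (Finset.sum_le_sum fun p hp ↦ ?_).trans
    (sum_rpow_mul_rpow_le_of_isSquare hα (S := {p ∈ S ×ˢ S | IsSquare (p.1 * p.2)})
      fun p hp ↦ ?_)
  all_goals simp only [Finset.mem_filter, Finset.mem_product] at hp
  · exact mul_le_mul (ha _ hp.1.1) (ha _ hp.1.2) (norm_nonneg _) (by positivity)
  · exact ⟨Nat.one_le_iff_ne_zero.1 (hS _ hp.1.1), hp.2⟩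

lemma sum_norm_mul_rpow_le {α β : ℝ} (hβ : 0 < β) (hβ1 : β ≤ 1) {a : ℕ → ℂ} {M : ℕ}
    {S : Finset ℕ} (hS : S ⊆ Finset.Icc 1 M) (ha : ∀ m ∈ S, ‖a m‖ ≤ (m : ℝ) ^ (-α)) :
    ∑ m ∈ S, ‖a m‖ * (m : ℝ) ^ (α + β - 1) ≤ (M : ℝ) ^ β / β := by
  calc ∑ m ∈ S, ‖a m‖ * (m : ℝ) ^ (α + β - 1) ≤ ∑ m ∈ S, (m : ℝ) ^ (β - 1) := by
        refine Finset.sum_le_sum fun m hm ↦ ?_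
        have hm0 : (0 : ℝ) < m := mod_cast (Finset.mem_Icc.1 (hS hm)).1
        calc ‖a m‖ * (m : ℝ) ^ (α + β - 1) ≤ (m : ℝ) ^ (-α) * (m : ℝ) ^ (α + β - 1) := by
              gcongr
              exact ha m hm
          _ = (m : ℝ) ^ (β - 1) := by
              rw [← Real.rpow_add hm0]
              ring_nf
    _ ≤ ∑ m ∈ Finset.Icc 1 M, (m : ℝ) ^ (β - 1) :=
        Finset.sum_le_sum_of_subset_of_nonneg hS fun _ _ _ ↦ by positivity
    _ ≤ (M : ℝ) ^ β / β := sum_Icc_rpow_sub_one_le hβ hβ1 M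

theorem exists_sum_norm_sq_jacobiSym_le {α β : ℝ} (hα : 1 / 2 < α) (hβ : 0 < β) (hβ1 : β ≤ 1)
    (hαβ : 3 / 2 < α + β) :
    ∃ C : ℝ, 0 ≤ C ∧ ∀ a : ℕ → ℂ, (∀ m, 1 ≤ m → ‖a m‖ ≤ (m : ℝ) ^ (-α)) →
      ∀ (M : ℕ) (S : Finset ℕ) (b c : ℤ) (J : ℕ), S ⊆ Finset.Icc 1 M →
      (∀ m ∈ S, Odd m ∧ IsCoprime c m) →
      ∑ j ∈ Finset.range J, ‖∑ m ∈ S, a m * jacobiSym (b + c * j) m‖ ^ 2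
        ≤ C * (J + (M : ℝ) ^ (2 * β)) := by
  set Z := (∑' k : ℕ, (k : ℝ) ^ (2 * -α)) ^ 3
  have : 0 ≤ Z := pow_nonneg (tsum_nonneg fun k ↦ by positivity) 3
  obtain ⟨ε, hε, hexp⟩ : ∃ ε, 0 < ε ∧ 1 / 2 + ε = α + β - 1 :=
    ⟨α + β - 3 / 2, by linarith, by ring⟩
  refine ⟨Z + (1 + 1 / ε) / β ^ 2, by positivity, fun a ha M S b c J hSM hS ↦ ?_⟩
  have hS1 : ∀ m ∈ S, 1 ≤ m := fun m hm ↦ (Finset.mem_Icc.1 (hSM hm)).1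
  have diagonal := sum_norm_mul_norm_le_of_isSquare hα hS1 fun m hm ↦ ha m (hS1 m hm)
  have off_diagonal := sum_norm_mul_rpow_le hβ hβ1 hSM fun m hm ↦ ha m (hS1 m hm)
  rw [← hexp] at off_diagonal
  calc _ ≤ J * Z + (1 + 1 / ε) * ((M : ℝ) ^ β / β) ^ 2 := by
        refine (sum_norm_sq_jacobiSym_le_diagonal_add hε hS a b J).trans ?_
        gcongr
    _ = Z * J + (1 + 1 / ε) / β ^ 2 * (M : ℝ) ^ (2 * β) := by
      rw [mul_comm 2 β, Real.rpow_mul M.cast_nonneg, Real.rpow_two]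
      ring
    _ ≤ _ := by
      have : 0 ≤ Z * (M : ℝ) ^ (2 * β) := by positivity
      have : 0 ≤ (1 + 1 / ε) / β ^ 2 * J := by positivity
      linarith

end MeanSquare

/-! ### The Kronecker character `(· / 4n)` -/

section Kronecker

/-- The character `χ⁽⁴ⁿ⁾ = (· / 4n)`: the Jacobi symbol `(· | n)` lifted to the modulus `4n`,
which makes it vanish at even numbers. -/
def kroneckerChar (n : ℕ) [NeZero n] : DirichletCharacter ℂ (4 * n) :=
  (jacobiChar n).changeLevel (Dvd.intro_left 4 rfl)

lemma changeLevel_jacobiChar_natCast {a m : ℕ} [NeZero a] (h : a ∣ m) {x : ℕ} (hx : x.Coprime m) :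
    (jacobiChar a).changeLevel h x = jacobiSym x a := by
  rw [← Int.cast_natCast x, DirichletCharacter.changeLevel_eq_cast_of_dvd' _ h
    (Nat.isCoprime_iff_coprime.2 hx), jacobiChar_intCast]

variable {n : ℕ} [NeZero n]

lemma kroneckerChar_natCast (m : ℕ) :
    kroneckerChar n m = if Odd m then (jacobiSym m n : ℂ) else 0 := by
  by_cases hcop : m.Coprime (4 * n)
  · have hm : Odd m :=
      Nat.coprime_two_right.1 (hcop.coprime_dvd_right ⟨2 * n, by ring⟩)
    rw [if_pos hm]
    exact changeLevel_jacobiChar_natCast _ hcop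
  · rw [MulChar.map_nonunit _ ((ZMod.isUnit_iff_coprime _ _).not.2 hcop)]
    split_ifs with hm
    · have hmn : ¬ m.Coprime n := fun h ↦
        hcop (Nat.Coprime.mul_right ((Nat.coprime_two_right.2 hm).pow_right 2) h)
      rw [eq_comm, Int.cast_eq_zero, jacobiSym.eq_zero_iff_not_coprime]
      simpa using hmn
    · rfl

lemma eq_kroneckerChar {χ : DirichletCharacter ℂ (4 * n)}
    (hodd : ∀ m : ℕ, Odd m → χ m = jacobiSym m n) (heven : ∀ m : ℕ, Even m → χ m = 0) :
    χ = kroneckerChar n := by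
  refine MulChar.ext' fun x ↦ ?_
  rw [← ZMod.natCast_zmod_val x, kroneckerChar_natCast]
  split_ifs with h
  · exact hodd _ h
  · exact heven _ (Nat.not_odd_iff_even.1 h)

lemma jacobiChar_mul_sq {a k : ℕ} [NeZero a] [NeZero k] :
    jacobiChar (a * k ^ 2) = (jacobiChar a).changeLevel (Dvd.intro _ rfl) := by
  refine MulChar.ext fun u ↦ ?_
  have hcop := ZMod.val_coe_unit_coprime u
  rw [← ZMod.natCast_zmod_val (u : ZMod (a * k ^ 2)), jacobiChar_natCast,
    changeLevel_jacobiChar_natCast _ hcop, jacobiSym.mul_right, jacobiSym.pow_right,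
    jacobiSym.sq_one, mul_one]
  exact (hcop.coprime_dvd_right ((dvd_pow_self k two_ne_zero).mul_left a))

lemma kroneckerChar_ne_one (hn : Odd n) (hsq : ¬ IsSquare n) : kroneckerChar n ≠ 1 := by
  obtain ⟨a, k, rfl, ha, hsqf, ha1, hk⟩ := exists_squarefree_mul_sq_of_odd hn hsq
  have : NeZero a := ⟨hsqf.ne_zero⟩
  have : NeZero k := ⟨hk⟩
  rw [kroneckerChar, Ne, DirichletCharacter.changeLevel_eq_one_iff, jacobiChar_mul_sq,
    DirichletCharacter.changeLevel_eq_one_iff, DirichletCharacter.eq_one_iff_conductor_eq_one,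
    (jacobiChar_isPrimitive ha hsqf)]
  exact ha1

lemma kroneckerChar_eq_one (hsq : IsSquare n) : kroneckerChar n = 1 := by
  obtain ⟨k, rfl⟩ := hsq
  have : NeZero k := ⟨left_ne_zero_of_mul (NeZero.ne (k * k))⟩
  rw [kroneckerChar, DirichletCharacter.changeLevel_eq_one_iff]
  refine MulChar.ext fun u ↦ ?_
  have hcop := ZMod.val_coe_unit_coprime u
  rw [MulChar.one_apply_coe, ← ZMod.natCast_zmod_val (u : ZMod (k * k)), jacobiChar_natCast,
    jacobiSym.mul_right, ← sq, jacobiSym.sq_one, Int.cast_one]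
  exact hcop.coprime_mul_right_right

lemma sum_Icc_kroneckerChar (T : ℕ) :
    ∑ m ∈ Finset.Icc 1 T, kroneckerChar n m
      = ∑ j ∈ Finset.range ((T + 1) / 2), (jacobiSym (1 + 2 * j) n : ℂ) := by
  induction T with
  | zero => simp
  | succ T ih =>
    rw [Finset.sum_Icc_succ_top (by lia), ih, kroneckerChar_natCast]
    split_ifs with hT
    · obtain ⟨j, hj⟩ := hT
      rw [show (T + 1 + 1) / 2 = (T + 1) / 2 + 1 by lia, Finset.sum_range_succ,
        show (T + 1) / 2 = j by lia, hj]
      push_cast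
      rw [add_comm (1 : ℤ)]
    · rw [add_zero, show (T + 1 + 1) / 2 = (T + 1) / 2 by grind]

lemma norm_sum_Icc_kroneckerChar_le {ε : ℝ} (hε : 0 < ε) (hn : Odd n) (hsq : ¬ IsSquare n)
    (T : ℕ) :
    ‖∑ m ∈ Finset.Icc 1 T, kroneckerChar n m‖ ≤ (1 + 1 / ε) * (n : ℝ) ^ (1 / 2 + ε) := by
  have hcop : IsCoprime (2 : ℤ) n := Nat.isCoprime_iff_coprime.2 (Nat.coprime_two_left.2 hn)
  have h := progressionBound_jacobiSym hε hn hsq 1 2 hcop ((T + 1) / 2)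
  rw [← Real.norm_eq_abs, ← norm_real] at h
  simpa only [sum_Icc_kroneckerChar, ofReal_sum, ofReal_intCast] using h

/-- `L(w, χ⁽⁴ⁿ⁾)` for odd `n`, as a function of all `n : ℕ` by the value `0` at even `n`. -/
def kroneckerL (w : ℂ) (n : ℕ) : ℂ :=
  if h : Odd n then
    haveI : NeZero n := ⟨h.pos.ne'⟩
    (kroneckerChar n).LFunction w
  else 0

lemma kroneckerL_of_odd (w : ℂ) (hn : Odd n) : kroneckerL w n = (kroneckerChar n).LFunction w :=
  dif_pos hn

lemma kroneckerL_of_even (w : ℂ) {m : ℕ} (hm : Even m) : kroneckerL w m = 0 :=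
  dif_neg (Nat.not_odd_iff_even.2 hm)

/-- The Dirichlet series of `L(w, χ⁽⁴ⁿ⁾)` truncated at `m ≤ M`. -/
def kroneckerPartial (M : ℕ) (w : ℂ) (n : ℕ) : ℂ :=
  ∑ m ∈ Finset.Icc 1 M with Odd m, (m : ℂ) ^ (-w) * jacobiSym m n

lemma norm_kroneckerL_sub_partial_le {ε : ℝ} (hε : 0 < ε) (hn : Odd n) (hsq : ¬ IsSquare n)
    {w : ℂ} (hw : 0 < w.re) (M : ℕ) :
    ‖kroneckerL w n - kroneckerPartial M w n‖
      ≤ 2 * ((1 + 1 / ε) * (n : ℝ) ^ (1 / 2 + ε)) * (‖w‖ / w.re) * (M + 1 : ℝ) ^ (-w.re) := by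
  have h := norm_LFunction_sub_sum_Icc_le (kroneckerChar_ne_one hn hsq)
    (norm_sum_Icc_kroneckerChar_le hε hn hsq) M hw
  have hpartial : ∑ m ∈ Finset.Icc 1 M, kroneckerChar n m * (m : ℂ) ^ (-w)
      = kroneckerPartial M w n := by
    rw [kroneckerPartial, Finset.sum_filter]
    refine Finset.sum_congr rfl fun m _ ↦ ?_
    rw [kroneckerChar_natCast, ite_mul, zero_mul, mul_comm]
  rwa [hpartial, ← kroneckerL_of_odd w hn] at h

end Kronecker

/-! ### The mean square of `L(w, χ⁽⁴ⁿ⁾)` over nonsquares -/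

section LValueMeanSquare

lemma qrSign_four_mul_add (j r m : ℕ) : qrSign (4 * j + r) m = qrSign r m := by
  have h : ((4 * j + r : ℕ) : ZMod 4) = r := by
    push_cast
    rw [show (4 : ZMod 4) = 0 from rfl, zero_mul, zero_add]
  rw [qrSign, qrSign, h]

-- Reciprocity turns the character `(· / n)` into `(n / ·)`, which makes `n` the variable in which
-- the mean square estimate sums.
lemma kroneckerPartial_four_mul_add {r : ℕ} (hr : Odd r) (M : ℕ) (w : ℂ) (j : ℕ) :
    kroneckerPartial M w (4 * j + r) = ∑ m ∈ Finset.Icc 1 M with Odd m,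
      (m : ℂ) ^ (-w) * qrSign r m * jacobiSym (r + 4 * j) m := by
  refine Finset.sum_congr rfl fun m hm ↦ ?_
  have hodd : Odd (4 * j + r) := Even.add_odd ⟨2 * j, by ring⟩ hr
  rw [jacobiSym.quadratic_reciprocity' (Finset.mem_filter.1 hm).2 hodd, qrSign_four_mul_add]
  push_cast
  rw [add_comm (4 * (j : ℤ)), mul_assoc]

lemma norm_natCast_cpow_mul_qrSign_le {w : ℂ} (r : ℕ) {m : ℕ} (hm : 1 ≤ m) :
    ‖(m : ℂ) ^ (-w) * qrSign r m‖ ≤ (m : ℝ) ^ (-w.re) := by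
  rw [norm_mul, norm_natCast_cpow_of_pos hm, neg_re]
  refine mul_le_of_le_one_right (by positivity) ?_
  rw [norm_intCast]
  exact abs_jacobiSym_le_one _ m

-- The truncation length `X^(2/3)` balances the tail `X^(1/2) M^(-3/4)` against the off-diagonal
-- term `M^(3/2)` of the mean square.
lemma exists_norm_kroneckerL_sub_partial_floor_le {w : ℂ} (hw : 3 / 4 < w.re) :
    ∃ D : ℝ, ∀ n : ℕ, Odd n → ¬ IsSquare n → ∀ X : ℝ, n ≤ X →
      ‖kroneckerL w n - kroneckerPartial ⌊X ^ (2 / 3 : ℝ)⌋₊ w n‖ ≤ D := by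
  obtain ⟨ε, hε⟩ : ∃ ε, ε = 2 / 3 * w.re - 1 / 2 := ⟨_, rfl⟩
  have hε0 : 0 < ε := by linarith
  have hw0 : 0 < w.re := by linarith
  refine ⟨2 * (1 + 1 / ε) * (‖w‖ / w.re), fun n hn hsq X hX ↦ ?_⟩
  have : NeZero n := ⟨hn.pos.ne'⟩
  have hX0 : 0 < X := lt_of_lt_of_le (mod_cast hn.pos) hX
  set M := ⌊X ^ (2 / 3 : ℝ)⌋₊
  have balance : (n : ℝ) ^ (1 / 2 + ε) * (M + 1 : ℝ) ^ (-w.re) ≤ 1 :=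
    calc _ ≤ X ^ (1 / 2 + ε) * (X ^ (2 / 3 : ℝ)) ^ (-w.re) := by
          refine mul_le_mul (by gcongr) ?_ (by positivity) (by positivity)
          exact Real.rpow_le_rpow_of_nonpos (by positivity) (Nat.lt_floor_add_one _).le
            (by linarith)
      _ = 1 := by
        rw [← Real.rpow_mul hX0.le, ← Real.rpow_add hX0, hε]
        ring_nf
        exact Real.rpow_zero X
  calc _ ≤ _ := norm_kroneckerL_sub_partial_le hε0 hn hsq hw0 M
    _ = 2 * (1 + 1 / ε) * (‖w‖ / w.re) * ((n : ℝ) ^ (1 / 2 + ε) * (M + 1 : ℝ) ^ (-w.re)) := by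
      ring
    _ ≤ _ := mul_le_of_le_one_right (by positivity) balance

/-- `‖L(w, χ⁽⁴ⁿ⁾)‖` at nonsquare `n`, and `0` at squares, where the character is principal. -/
def nonsquareNormL (w : ℂ) (n : ℕ) : ℝ :=
  if IsSquare n then 0 else ‖kroneckerL w n‖

lemma nonsquareNormL_nonneg (w : ℂ) (n : ℕ) : 0 ≤ nonsquareNormL w n := by
  rw [nonsquareNormL]
  positivity

lemma nonsquareNormL_of_even (w : ℂ) {n : ℕ} (hn : Even n) : nonsquareNormL w n = 0 := by
  rw [nonsquareNormL, kroneckerL_of_even w hn, norm_zero, ite_self]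

lemma nonsquareNormL_sq_le {w P : ℂ} {n : ℕ} {D : ℝ}
    (hP : ¬ IsSquare n → ‖kroneckerL w n - P‖ ≤ D) :
    nonsquareNormL w n ^ 2 ≤ 2 * ‖P‖ ^ 2 + 2 * D ^ 2 := by
  rw [nonsquareNormL]
  split_ifs with hsq
  · rw [zero_pow two_ne_zero]
    positivity
  have htri := norm_le_norm_add_norm_sub P (kroneckerL w n)
  rw [norm_sub_rev] at htri
  calc ‖kroneckerL w n‖ ^ 2 ≤ (‖P‖ + D) ^ 2 := by
        gcongr
        linarith [hP hsq]
    _ ≤ 2 * ‖P‖ ^ 2 + 2 * D ^ 2 := by linarith [add_sq_le (a := ‖P‖) (b := D)]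

lemma exists_sum_norm_kroneckerPartial_sq_le {w : ℂ} (hw : 3 / 4 < w.re) {r : ℕ} (hr : Odd r) :
    ∃ C : ℝ, 0 ≤ C ∧ ∀ M Y : ℕ,
      ∑ j ∈ Finset.range Y, ‖kroneckerPartial M w (4 * j + r)‖ ^ 2
        ≤ C * (Y + (M : ℝ) ^ (3 / 2 : ℝ)) := by
  obtain ⟨C, hC0, hC⟩ := exists_sum_norm_sq_jacobiSym_le (α := w.re) (β := 3 / 4)
    (by linarith) (by norm_num) (by norm_num) (by linarith)
  refine ⟨C, hC0, fun M Y ↦ ?_⟩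
  have hcop {m : ℕ} (hm : Odd m) : IsCoprime (4 : ℤ) m :=
    Nat.isCoprime_iff_coprime.2 ((Nat.coprime_two_left.2 hm).pow_left 2)
  have hbound := hC _ (fun m hm ↦ norm_natCast_cpow_mul_qrSign_le r hm) M _ r 4 Y
    (Finset.filter_subset Odd _) fun m hm ↦
      ⟨(Finset.mem_filter.1 hm).2, hcop (Finset.mem_filter.1 hm).2⟩
  rw [show 2 * (3 / 4 : ℝ) = 3 / 2 by norm_num] at hbound
  simpa only [kroneckerPartial_four_mul_add hr] using hbound

lemma exists_sum_nonsquareNormL_sq_progression_le {w : ℂ} (hw : 3 / 4 < w.re) {r : ℕ}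
    (hr : Odd r) (hr4 : r < 4) :
    ∃ C : ℝ, 0 ≤ C ∧ ∀ Y : ℕ,
      ∑ j ∈ Finset.range Y, nonsquareNormL w (4 * j + r) ^ 2 ≤ C * Y := by
  obtain ⟨D, hD⟩ := exists_norm_kroneckerL_sub_partial_floor_le hw
  obtain ⟨C, hC0, hC⟩ := exists_sum_norm_kroneckerPartial_sq_le hw hr
  refine ⟨10 * C + 2 * D ^ 2, by positivity, fun Y ↦ ?_⟩
  set X : ℝ := 4 * Y
  set M := ⌊X ^ (2 / 3 : ℝ)⌋₊
  have truncate (j : ℕ) (hj : j ∈ Finset.range Y) : nonsquareNormL w (4 * j + r) ^ 2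
      ≤ 2 * ‖kroneckerPartial M w (4 * j + r)‖ ^ 2 + 2 * D ^ 2 := by
    have hX : ((4 * j + r : ℕ) : ℝ) ≤ X := by
      have : 4 * j + r ≤ 4 * Y := by grind
      calc ((4 * j + r : ℕ) : ℝ) ≤ (4 * Y : ℕ) := Nat.cast_le.2 this
        _ = X := by push_cast; rfl
    exact nonsquareNormL_sq_le fun hsq ↦ hD _ (Even.add_odd ⟨2 * j, by ring⟩ hr) hsq X hX
  have hM : (M : ℝ) ^ (3 / 2 : ℝ) ≤ X := by
    calc (M : ℝ) ^ (3 / 2 : ℝ) ≤ (X ^ (2 / 3 : ℝ)) ^ (3 / 2 : ℝ) := by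
          gcongr
          exact Nat.floor_le (by positivity)
      _ = X := by
          rw [← Real.rpow_mul (by positivity)]
          norm_num
  calc _ ≤ ∑ j ∈ Finset.range Y, (2 * ‖kroneckerPartial M w (4 * j + r)‖ ^ 2 + 2 * D ^ 2) :=
        Finset.sum_le_sum truncate
    _ = 2 * ∑ j ∈ Finset.range Y, ‖kroneckerPartial M w (4 * j + r)‖ ^ 2 + Y * (2 * D ^ 2) := by
      rw [Finset.sum_add_distrib, ← Finset.mul_sum, Finset.sum_const, Finset.card_range,
        nsmul_eq_mul]
    _ ≤ 2 * (C * (Y + 4 * Y)) + Y * (2 * D ^ 2) := by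
      gcongr
      exact (hC M Y).trans (by gcongr)
    _ = _ := by ring

lemma sum_range_four_mul_of_even_eq_zero {R : Type*} [AddCommMonoid R] {f : ℕ → R}
    (hf : ∀ k, Even k → f k = 0) (Y : ℕ) :
    ∑ k ∈ Finset.range (4 * Y), f k
      = ∑ j ∈ Finset.range Y, f (4 * j + 1) + ∑ j ∈ Finset.range Y, f (4 * j + 3) := by
  induction Y with
  | zero => simp
  | succ Y ih =>
    rw [show 4 * (Y + 1) = 4 * Y + 1 + 1 + 1 + 1 by ring]
    simp only [Finset.sum_range_succ, ih]
    rw [hf (4 * Y) ⟨2 * Y, by ring⟩, hf (4 * Y + 1 + 1) ⟨2 * Y + 1, by ring⟩]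
    abel

lemma exists_sum_nonsquareNormL_sq_le {w : ℂ} (hw : 3 / 4 < w.re) :
    ∃ C : ℝ, ∀ n : ℕ, ∑ k ∈ Finset.Icc 1 n, nonsquareNormL w k ^ 2 ≤ C * n := by
  obtain ⟨C₁, hC₁, h₁⟩ := exists_sum_nonsquareNormL_sq_progression_le hw odd_one (by norm_num)
  obtain ⟨C₃, hC₃, h₃⟩ :=
    exists_sum_nonsquareNormL_sq_progression_le hw (r := 3) (by decide) (by norm_num)
  refine ⟨2 * (C₁ + C₃), fun n ↦ ?_⟩
  rcases n.eq_zero_or_pos with rfl | hn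
  · simp
  have hsub : Finset.Icc 1 n ⊆ Finset.range (4 * (n / 4 + 1)) := fun k hk ↦ by
    rw [Finset.mem_Icc] at hk
    rw [Finset.mem_range]
    lia
  have hlen : ((n / 4 + 1 : ℕ) : ℝ) ≤ 2 * n := mod_cast (by lia : n / 4 + 1 ≤ 2 * n)
  calc _ ≤ ∑ k ∈ Finset.range (4 * (n / 4 + 1)), nonsquareNormL w k ^ 2 :=
        Finset.sum_le_sum_of_subset_of_nonneg hsub fun _ _ _ ↦ sq_nonneg _
    _ = _ := sum_range_four_mul_of_even_eq_zero (fun k hk ↦ by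
      rw [nonsquareNormL_of_even w hk, zero_pow two_ne_zero]) _
    _ ≤ C₁ * (n / 4 + 1 : ℕ) + C₃ * (n / 4 + 1 : ℕ) := add_le_add (h₁ _) (h₃ _)
    _ ≤ C₁ * (2 * n) + C₃ * (2 * n) := by gcongr
    _ = _ := by ring

lemma summable_mul_rpow_neg_of_sum_sq_le {f : ℕ → ℝ} {C : ℝ}
    (hsum : ∀ n : ℕ, ∑ k ∈ Finset.Icc 1 n, f k ^ 2 ≤ C * n) {σ : ℝ} (hσ : 1 < σ) :
    Summable fun n : ℕ ↦ f n * (n : ℝ) ^ (-σ) := by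
  have square : LSeriesSummable (fun k ↦ (f k ^ 2 : ℝ)) (σ : ℂ) := by
    refine LSeriesSummable_of_sum_norm_bigO_and_nonneg (r := 1)
      (Asymptotics.IsBigO.of_bound C (.of_forall fun n ↦ ?_)) (fun n ↦ sq_nonneg _) zero_le_one
      (by simpa using hσ)
    rw [Real.rpow_one, Real.norm_of_nonneg (by positivity), Real.norm_of_nonneg (by positivity)]
    exact hsum n
  have zeta : Summable fun n : ℕ ↦ (n : ℝ) ^ (-σ) := Real.summable_nat_rpow.2 (by linarith)
  refine Summable.of_norm_bounded (zeta.add square.norm) fun n ↦ ?_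
  rcases eq_or_ne n 0 with rfl | hn
  · simp [Real.zero_rpow (by linarith : -σ ≠ 0)]
  rw [LSeries.norm_term_eq, if_neg hn, norm_real, ofReal_re, Real.norm_of_nonneg (sq_nonneg _),
    div_eq_mul_inv, ← Real.rpow_neg n.cast_nonneg, norm_mul, Real.norm_eq_abs,
    Real.norm_of_nonneg (by positivity : 0 ≤ (n : ℝ) ^ (-σ)), ← one_add_mul]
  gcongr
  nlinarith [sq_nonneg (|f n| - 1), sq_abs (f n)]

lemma summable_nonsquareNormL_mul_rpow {w : ℂ} (hw : 3 / 4 < w.re) {σ : ℝ} (hσ : 1 < σ) :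
    Summable fun n : ℕ ↦ nonsquareNormL w n * (n : ℝ) ^ (-σ) :=
  have ⟨_, h⟩ := exists_sum_nonsquareNormL_sq_le hw
  summable_mul_rpow_neg_of_sum_sq_le h hσ

end LValueMeanSquare

/-! ### Square indices and absolute convergence -/

section AbsoluteConvergence

lemma norm_inv_one_sub_natCast_cpow_le {p : ℕ} (hp : 2 ≤ p) {σ : ℝ} (hσ : 1 ≤ σ) {t : ℂ}
    (ht : σ ≤ t.re) : ‖(1 - (p : ℂ) ^ (-t))⁻¹‖ ≤ Real.exp (2 * (p : ℝ) ^ (-σ)) := by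
  have hp2 : (2 : ℝ) ≤ p := by exact_mod_cast hp
  have hnorm : ‖(p : ℂ) ^ (-t)‖ ≤ (p : ℝ) ^ (-σ) := by
    rw [norm_natCast_cpow_of_pos (by lia), neg_re]
    exact Real.rpow_le_rpow_of_exponent_le (by linarith) (by linarith)
  have hhalf : (p : ℝ) ^ (-σ) ≤ 1 / 2 := by
    refine (Real.rpow_le_rpow_of_exponent_le (by linarith) (neg_le_neg hσ)).trans ?_
    rw [Real.rpow_neg_one, ← one_div]
    exact one_div_le_one_div_of_le two_pos hp2
  have hpos : 0 ≤ (p : ℝ) ^ (-σ) := by positivity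
  have hlower : 1 - (p : ℝ) ^ (-σ) ≤ ‖1 - (p : ℂ) ^ (-t)‖ := by
    have := norm_sub_norm_le (1 : ℂ) ((p : ℂ) ^ (-t))
    rw [norm_one] at this
    linarith
  calc ‖(1 - (p : ℂ) ^ (-t))⁻¹‖ ≤ (1 - (p : ℝ) ^ (-σ))⁻¹ := by
        rw [norm_inv]
        exact inv_anti₀ (by linarith) hlower
    _ ≤ 2 * (p : ℝ) ^ (-σ) + 1 := by
        rw [inv_le_iff_one_le_mul₀ (by linarith)]
        nlinarith
    _ ≤ Real.exp (2 * (p : ℝ) ^ (-σ)) := Real.add_one_le_exp _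

lemma exists_norm_aF_le {σ : ℝ} (hσ : 1 < σ) :
    ∃ A : ℝ, 0 ≤ A ∧ ∀ t : ℂ, σ ≤ t.re → ∀ m : ℕ, ‖aF t m‖ ≤ A := by
  have hsum : Summable fun n : ℕ ↦ 2 * (n : ℝ) ^ (-σ) :=
    (Real.summable_nat_rpow.2 (neg_lt_neg hσ)).mul_left 2
  refine ⟨Real.exp (∑' n : ℕ, 2 * (n : ℝ) ^ (-σ)), (Real.exp_pos _).le, fun t ht m ↦ ?_⟩
  calc ‖aF t m‖ = ∏ p ∈ m.primeFactors, ‖(1 - (p : ℂ) ^ (-t))⁻¹‖ := norm_prod _ _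
    _ ≤ ∏ p ∈ m.primeFactors, Real.exp (2 * (p : ℝ) ^ (-σ)) :=
        Finset.prod_le_prod (fun _ _ ↦ norm_nonneg _) fun p hp ↦
          norm_inv_one_sub_natCast_cpow_le (Nat.prime_of_mem_primeFactors hp).two_le hσ.le ht
    _ = Real.exp (∑ p ∈ m.primeFactors, 2 * (p : ℝ) ^ (-σ)) := (Real.exp_sum _ _).symm
    _ ≤ Real.exp (∑' n : ℕ, 2 * (n : ℝ) ^ (-σ)) :=
        Real.exp_le_exp.2 (hsum.sum_le_tsum _ fun _ _ ↦ by positivity)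

lemma norm_prod_primeFactors_one_sub_cpow_le {m : ℕ} (hm : m ≠ 0) {w : ℂ} (hw : 0 ≤ w.re) :
    ‖∏ p ∈ m.primeFactors, (1 - (p : ℂ) ^ (-w))‖ ≤ m := by
  rw [norm_prod]
  calc ∏ p ∈ m.primeFactors, ‖1 - (p : ℂ) ^ (-w)‖ ≤ ∏ p ∈ m.primeFactors, (p : ℝ) := by
        refine Finset.prod_le_prod (fun _ _ ↦ norm_nonneg _) fun p hp ↦ ?_
        have hp2 : (2 : ℝ) ≤ p := by exact_mod_cast (Nat.prime_of_mem_primeFactors hp).two_le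
        have hnorm : ‖(p : ℂ) ^ (-w)‖ ≤ 1 := by
          rw [norm_natCast_cpow_of_pos (Nat.pos_of_mem_primeFactors hp)]
          exact Real.rpow_le_one_of_one_le_of_nonpos (by linarith) (by simpa using hw)
        have := norm_sub_le (1 : ℂ) ((p : ℂ) ^ (-w))
        rw [norm_one] at this
        linarith
    _ ≤ m := by
        rw [← Nat.cast_prod, Nat.cast_le]
        exact Nat.le_of_dvd hm.pos (Nat.prod_primeFactors_dvd m)

lemma primeFactors_four_mul_mul_self (k : ℕ) :
    (4 * (k * k)).primeFactors = (2 * k).primeFactors := by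
  rw [show 4 * (k * k) = (2 * k) ^ 2 by ring, Nat.primeFactors_pow _ two_ne_zero]

lemma kroneckerL_of_isSquare {n : ℕ} (hn : Odd n) (hsq : IsSquare n) {w : ℂ} (hw : w ≠ 1) :
    kroneckerL w n = (∏ p ∈ (4 * n).primeFactors, (1 - (p : ℂ) ^ (-w))) * riemannZeta w := by
  have : NeZero n := ⟨hn.pos.ne'⟩
  rw [kroneckerL_of_odd w hn, kroneckerChar_eq_one hsq]
  exact DirichletCharacter.LFunctionTrivChar_eq_mul_riemannZeta hw

/-- `2√n` at the squares `n` and `0` elsewhere: a majorant for the finite Euler product by which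
`L(w, χ⁽⁴ⁿ⁾)` differs from `ζ(w)` at square `n`. -/
def squareWeight (n : ℕ) : ℝ := if IsSquare n then 2 * √n else 0

lemma norm_kroneckerL_le {w : ℂ} (hw : 0 ≤ w.re) (hw1 : w ≠ 1) (n : ℕ) :
    ‖kroneckerL w n‖ ≤ nonsquareNormL w n + ‖riemannZeta w‖ * squareWeight n := by
  rw [nonsquareNormL, squareWeight]
  split_ifs with hsq
  · rcases n.even_or_odd with hn | hn
    · rw [kroneckerL_of_even w hn, norm_zero]
      positivity
    rw [kroneckerL_of_isSquare hn hsq hw1, norm_mul, zero_add, mul_comm]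
    obtain ⟨k, rfl⟩ := hsq
    have hk : 2 * k ≠ 0 := mul_ne_zero two_ne_zero (left_ne_zero_of_mul hn.pos.ne')
    have hprod := norm_prod_primeFactors_one_sub_cpow_le hk hw
    rw [← primeFactors_four_mul_mul_self] at hprod
    push_cast at hprod ⊢
    rw [Real.sqrt_mul_self k.cast_nonneg]
    gcongr
  · rw [mul_zero, add_zero]

lemma mul_self_injective_nat : Function.Injective fun k : ℕ ↦ k * k :=
  fun _ _ ↦ Nat.mul_self_inj.1

lemma summable_squareWeight_mul_rpow {σ : ℝ} (hσ : 1 < σ) :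
    Summable fun n : ℕ ↦ squareWeight n * (n : ℝ) ^ (-σ) := by
  rw [← mul_self_injective_nat.summable_iff]
  · refine ((Real.summable_nat_rpow.2 (by linarith : 1 - 2 * σ < -1)).mul_left 2).congr fun k ↦ ?_
    rcases k.eq_zero_or_pos with rfl | hk
    · simp [squareWeight, Real.zero_rpow (by linarith : 1 - 2 * σ ≠ 0)]
    have hk0 : (0 : ℝ) < k := by exact_mod_cast hk
    rw [Function.comp_apply, squareWeight, if_pos ⟨k, rfl⟩, Nat.cast_mul,
      Real.sqrt_mul_self hk0.le, Real.mul_rpow hk0.le hk0.le, ← Real.rpow_add hk0, mul_assoc,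
      ← Real.rpow_one_add' hk0.le (by linarith)]
    ring_nf
  · rintro n hn
    have hsq : ¬ IsSquare n := fun ⟨k, hk⟩ ↦ hn ⟨k, hk.symm⟩
    rw [squareWeight, if_neg hsq, zero_mul]

/-- The `n`-th term of the series `F(w)`. -/
def seriesTerm (s w : ℂ) (n : ℕ) : ℂ :=
  ZMod.χ₈ n * kroneckerL w n * aF (2 * w) (4 * n) * (n : ℂ) ^ (-s)

lemma seriesTerm_of_odd (s w : ℂ) {n : ℕ} [NeZero n] (hn : Odd n) :
    seriesTerm s w n
      = ZMod.χ₈ n * (kroneckerChar n).LFunction w * aF (2 * w) (4 * n) * (n : ℂ) ^ (-s) := by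
  rw [seriesTerm, kroneckerL_of_odd w hn]

lemma seriesTerm_of_even (s w : ℂ) {n : ℕ} (hn : Even n) : seriesTerm s w n = 0 := by
  rw [seriesTerm, kroneckerL_of_even w hn, mul_zero, zero_mul, zero_mul]

lemma norm_χ₈_natCast_le_one (n : ℕ) : ‖(ZMod.χ₈ n : ℂ)‖ ≤ 1 := by
  rw [ZMod.χ₈_nat_eq_if_mod_eight]
  split_ifs <;> simp

lemma norm_seriesTerm_le {A : ℝ} {w : ℂ} (hA : ∀ m : ℕ, ‖aF (2 * w) m‖ ≤ A) (s : ℂ) (n : ℕ) :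
    ‖seriesTerm s w n‖ ≤ A * (‖kroneckerL w n‖ * (n : ℝ) ^ (-s.re)) := by
  have hA0 : 0 ≤ A := (norm_nonneg _).trans (hA 0)
  rcases n.eq_zero_or_pos with rfl | hn
  · rw [seriesTerm_of_even s w Even.zero, norm_zero]
    positivity
  rw [seriesTerm, norm_mul, norm_mul, norm_mul, norm_natCast_cpow_of_pos hn, neg_re]
  calc ‖(ZMod.χ₈ n : ℂ)‖ * ‖kroneckerL w n‖ * ‖aF (2 * w) (4 * n)‖ * (n : ℝ) ^ (-s.re)
      ≤ 1 * ‖kroneckerL w n‖ * A * (n : ℝ) ^ (-s.re) := by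
        gcongr
        · exact norm_χ₈_natCast_le_one n
        · exact hA _
    _ = A * (‖kroneckerL w n‖ * (n : ℝ) ^ (-s.re)) := by ring

theorem summable_norm_seriesTerm {s w : ℂ} (hs : 1 < s.re) (hw : 3 / 4 < w.re) (hw1 : w ≠ 1) :
    Summable fun n ↦ ‖seriesTerm s w n‖ := by
  obtain ⟨A, hA0, hA⟩ := exists_norm_aF_le (σ := 3 / 2) (by norm_num)
  have hA' := hA (2 * w) (by simpa using (by linarith : 3 / 2 ≤ 2 * w.re))
  refine .of_nonneg_of_le (fun n ↦ norm_nonneg _) (fun n ↦ ?_)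
    (((summable_nonsquareNormL_mul_rpow hw hs).add
      ((summable_squareWeight_mul_rpow hs).mul_left ‖riemannZeta w‖)).mul_left A)
  refine (norm_seriesTerm_le hA' s n).trans ?_
  rw [← mul_assoc ‖riemannZeta w‖, ← add_mul]
  gcongr
  exact norm_kroneckerL_le (by linarith) hw1 n

end AbsoluteConvergence

/-! ### The limit at `w = 1` -/

section Limit

lemma one_sub_norm_sub_one_le_re (w : ℂ) : 1 - ‖w - 1‖ ≤ w.re := by
  have := neg_le_of_abs_le (abs_re_le_norm (w - 1))
  rw [sub_re, one_re] at this
  linarith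

lemma norm_kroneckerPartial_le {δ : ℝ} (hδ : 0 < δ) (hδ1 : δ ≤ 1) {w : ℂ} (hw : 1 - δ ≤ w.re)
    (M n : ℕ) : ‖kroneckerPartial M w n‖ ≤ (M : ℝ) ^ δ / δ := by
  refine (norm_sum_le _ _).trans (le_trans ?_ (sum_Icc_rpow_sub_one_le hδ hδ1 M))
  refine (Finset.sum_le_sum fun m hm ↦ ?_).trans
    (Finset.sum_le_sum_of_subset_of_nonneg (Finset.filter_subset _ _) fun _ _ _ ↦ by positivity)
  have hm1 : 1 ≤ m := (Finset.mem_Icc.1 (Finset.mem_filter.1 hm).1).1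
  rw [norm_mul, norm_natCast_cpow_of_pos hm1, neg_re, norm_intCast]
  calc (m : ℝ) ^ (-w.re) * |(jacobiSym m n : ℝ)| ≤ (m : ℝ) ^ (-w.re) :=
        mul_le_of_le_one_right (by positivity) (abs_jacobiSym_le_one m n)
    _ ≤ (m : ℝ) ^ (δ - 1) :=
        Real.rpow_le_rpow_of_exponent_le (by exact_mod_cast hm1) (by linarith)

lemma norm_kroneckerL_sub_partial_self_le {n : ℕ} (hn : Odd n) (hsq : ¬ IsSquare n) {w : ℂ}
    (hw : ‖w - 1‖ ≤ 1 / 4) : ‖kroneckerL w n - kroneckerPartial n w n‖ ≤ 20 := by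
  have : NeZero n := ⟨hn.pos.ne'⟩
  have hn1 : (1 : ℝ) ≤ n := by exact_mod_cast hn.pos
  have hre : 3 / 4 ≤ w.re := by linarith [one_sub_norm_sub_one_le_re w]
  have hnorm : ‖w‖ ≤ 5 / 4 := by
    have := norm_add_le (w - 1) 1
    rw [sub_add_cancel, norm_one] at this
    linarith
  have hquot : ‖w‖ / w.re ≤ 2 := by
    rw [div_le_iff₀ (by linarith)]
    linarith
  have hcancel : (n : ℝ) ^ (1 / 2 + 1 / 4 : ℝ) * (n + 1 : ℝ) ^ (-w.re) ≤ 1 := by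
    calc (n : ℝ) ^ (1 / 2 + 1 / 4 : ℝ) * (n + 1 : ℝ) ^ (-w.re)
        ≤ (n + 1 : ℝ) ^ (1 / 2 + 1 / 4 : ℝ) * (n + 1 : ℝ) ^ (-w.re) := by
          gcongr
          linarith
      _ = (n + 1 : ℝ) ^ (1 / 2 + 1 / 4 - w.re) := by
          rw [sub_eq_add_neg, Real.rpow_add (by positivity) (1 / 2 + 1 / 4)]
      _ ≤ 1 := Real.rpow_le_one_of_one_le_of_nonpos (by linarith) (by linarith)
  calc ‖kroneckerL w n - kroneckerPartial n w n‖
      ≤ 2 * ((1 + 1 / (1 / 4)) * (n : ℝ) ^ (1 / 2 + 1 / 4 : ℝ)) * (‖w‖ / w.re)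
          * (n + 1 : ℝ) ^ (-w.re) :=
        norm_kroneckerL_sub_partial_le (by norm_num) hn hsq (by linarith) n
    _ = 10 * (‖w‖ / w.re) * ((n : ℝ) ^ (1 / 2 + 1 / 4 : ℝ) * (n + 1 : ℝ) ^ (-w.re)) := by ring
    _ ≤ 10 * 2 * 1 := by gcongr
    _ = 20 := by norm_num

lemma nonsquareNormL_le_mul_rpow {δ : ℝ} (hδ : 0 < δ) (hδ1 : δ ≤ 1 / 4) {w : ℂ}
    (hw : ‖w - 1‖ < δ) (n : ℕ) : nonsquareNormL w n ≤ (20 + 1 / δ) * (n : ℝ) ^ δ := by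
  rw [nonsquareNormL]
  split_ifs with hsq
  · positivity
  rcases n.even_or_odd with hn | hn
  · rw [kroneckerL_of_even w hn, norm_zero]
    positivity
  have hone : 1 ≤ (n : ℝ) ^ δ := Real.one_le_rpow (by exact_mod_cast hn.pos) hδ.le
  calc ‖kroneckerL w n‖ ≤ ‖kroneckerL w n - kroneckerPartial n w n‖ + ‖kroneckerPartial n w n‖ := by
        simpa using norm_add_le (kroneckerL w n - kroneckerPartial n w n) (kroneckerPartial n w n)
    _ ≤ 20 + (n : ℝ) ^ δ / δ := add_le_add
        (norm_kroneckerL_sub_partial_self_le hn hsq (hw.le.trans hδ1))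
        (norm_kroneckerPartial_le hδ (by linarith) (by linarith [one_sub_norm_sub_one_le_re w]) n n)
    _ ≤ 20 * (n : ℝ) ^ δ + (n : ℝ) ^ δ / δ := by linarith
    _ = (20 + 1 / δ) * (n : ℝ) ^ δ := by ring

/-- The residue of `L(w, χ⁽⁴ⁿ⁾)` at `w = 1` for odd `n`, and `0` for even `n`. -/
def kroneckerResidue (n : ℕ) : ℂ :=
  if Odd n ∧ IsSquare n then ∏ p ∈ (4 * n).primeFactors, (1 - (p : ℂ)⁻¹) else 0

lemma tendsto_sub_one_mul_kroneckerL (n : ℕ) :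
    Tendsto (fun w ↦ (w - 1) * kroneckerL w n) (𝓝[≠] 1) (𝓝 (kroneckerResidue n)) := by
  rcases n.even_or_odd with hn | hn
  · rw [kroneckerResidue, if_neg fun h ↦ Nat.not_even_iff_odd.2 h.1 hn]
    simpa only [kroneckerL_of_even _ hn, mul_zero] using tendsto_const_nhds
  have : NeZero n := ⟨hn.pos.ne'⟩
  simp only [kroneckerL_of_odd _ hn]
  by_cases hsq : IsSquare n
  · rw [kroneckerResidue, if_pos ⟨hn, hsq⟩, kroneckerChar_eq_one hsq]
    exact DirichletCharacter.LFunctionTrivChar_residue_one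
  · rw [kroneckerResidue, if_neg fun h ↦ hsq h.2]
    have hL : Continuous (kroneckerChar n).LFunction :=
      (DirichletCharacter.differentiable_LFunction (kroneckerChar_ne_one hn hsq)).continuous
    have hcont : Continuous fun w ↦ (w - 1) * (kroneckerChar n).LFunction w := by fun_prop
    simpa using (hcont.tendsto 1).mono_left nhdsWithin_le_nhds

lemma continuousAt_aF {t : ℂ} (ht : 1 < t.re) (m : ℕ) : ContinuousAt (fun u ↦ aF u m) t := by
  refine tendsto_finsetProd _ fun p hp ↦ ?_
  have hp' := Nat.prime_of_mem_primeFactors hp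
  have hpow : Continuous fun u : ℂ ↦ (p : ℂ) ^ (-u) :=
    continuous_neg.const_cpow (.inl (by exact_mod_cast hp'.ne_zero))
  exact (continuous_const.sub hpow).continuousAt.inv₀ (one_sub_prime_cpow_ne_zero hp' ht)

/-- The limit of `(w - 1)` times the `n`-th term of the series `F(w)` as `w → 1`. -/
def limitTerm (s : ℂ) (n : ℕ) : ℂ :=
  ZMod.χ₈ n * kroneckerResidue n * aF 2 (4 * n) * (n : ℂ) ^ (-s)

lemma tendsto_sub_one_mul_seriesTerm (s : ℂ) (n : ℕ) :
    Tendsto (fun w ↦ (w - 1) * seriesTerm s w n) (𝓝[≠] 1) (𝓝 (limitTerm s n)) := by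
  have haF : ContinuousAt (fun w : ℂ ↦ aF (2 * w) (4 * n)) 1 :=
    ContinuousAt.comp_of_eq (g := fun u ↦ aF u (4 * n))
      (continuousAt_aF (t := 2) (by norm_num) _) (by fun_prop) (mul_one 2)
  have haF' : Tendsto (fun w : ℂ ↦ aF (2 * w) (4 * n)) (𝓝[≠] 1) (𝓝 (aF 2 (4 * n))) := by
    simpa using haF.tendsto.mono_left nhdsWithin_le_nhds
  refine ((((tendsto_sub_one_mul_kroneckerL n).const_mul (ZMod.χ₈ n : ℂ)).mul haF').mul_const
    ((n : ℂ) ^ (-s))).congr fun w ↦ ?_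
  rw [seriesTerm]
  ring

lemma norm_sub_one_mul_seriesTerm_le {A δ : ℝ} (hδ : 0 < δ) (hδ1 : δ ≤ 1 / 4) {w : ℂ}
    (hA : ∀ m : ℕ, ‖aF (2 * w) m‖ ≤ A) (hw : ‖w - 1‖ < δ) (hw1 : w ≠ 1)
    (hζ : ‖(w - 1) * riemannZeta w‖ ≤ 2) (s : ℂ) (n : ℕ) :
    ‖(w - 1) * seriesTerm s w n‖
      ≤ A * (((20 + 1 / δ) * (n : ℝ) ^ δ + 2 * squareWeight n) * (n : ℝ) ^ (-s.re)) := by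
  have hA0 : 0 ≤ A := (norm_nonneg _).trans (hA 0)
  have hre : 0 ≤ w.re := by linarith [one_sub_norm_sub_one_le_re w]
  have hweight : 0 ≤ squareWeight n := by
    rw [squareWeight]
    positivity
  have hkey : ‖w - 1‖ * ‖kroneckerL w n‖
      ≤ (20 + 1 / δ) * (n : ℝ) ^ δ + 2 * squareWeight n := by
    calc ‖w - 1‖ * ‖kroneckerL w n‖
        ≤ ‖w - 1‖ * (nonsquareNormL w n + ‖riemannZeta w‖ * squareWeight n) := by
          gcongr
          exact norm_kroneckerL_le hre hw1 n
      _ = ‖w - 1‖ * nonsquareNormL w n + ‖(w - 1) * riemannZeta w‖ * squareWeight n := by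
          rw [norm_mul]
          ring
      _ ≤ 1 * ((20 + 1 / δ) * (n : ℝ) ^ δ) + 2 * squareWeight n := by
          gcongr
          · exact nonsquareNormL_nonneg w n
          · linarith
          · exact nonsquareNormL_le_mul_rpow hδ hδ1 hw n
      _ = _ := by rw [one_mul]
  calc ‖(w - 1) * seriesTerm s w n‖
      ≤ ‖w - 1‖ * (A * (‖kroneckerL w n‖ * (n : ℝ) ^ (-s.re))) := by
        rw [norm_mul]
        gcongr
        exact norm_seriesTerm_le hA s n
    _ = A * (‖w - 1‖ * ‖kroneckerL w n‖ * (n : ℝ) ^ (-s.re)) := by ring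
    _ ≤ _ := by gcongr

lemma summable_limit_majorant {δ σ : ℝ} (c : ℝ) (hσ : 1 < σ) (hδ : 1 + δ < σ) :
    Summable fun n : ℕ ↦ (c * (n : ℝ) ^ δ + 2 * squareWeight n) * (n : ℝ) ^ (-σ) := by
  refine Summable.congr (((Real.summable_nat_rpow.2 (by linarith : δ - σ < -1)).mul_left c).add
    ((summable_squareWeight_mul_rpow hσ).mul_left 2)) fun n ↦ ?_
  rcases n.eq_zero_or_pos with rfl | hn
  · simp [Real.zero_rpow (by linarith : δ - σ ≠ 0), Real.zero_rpow (by linarith : -σ ≠ 0)]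
  · rw [sub_eq_add_neg, Real.rpow_add (by exact_mod_cast hn)]
    ring

theorem tendsto_sub_one_mul_tsum_seriesTerm {s : ℂ} (hs : 1 < s.re) :
    Tendsto (fun w ↦ (w - 1) * ∑' n, seriesTerm s w n) (𝓝[≠] 1) (𝓝 (∑' n, limitTerm s n)) := by
  obtain ⟨A, -, hA⟩ := exists_norm_aF_le (σ := 3 / 2) (by norm_num)
  obtain ⟨δ, hδ, hδ1, hδs⟩ : ∃ δ : ℝ, 0 < δ ∧ δ ≤ 1 / 4 ∧ 1 + δ < s.re :=
    ⟨min (1 / 4) ((s.re - 1) / 2), lt_min (by norm_num) (by linarith), min_le_left _ _,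
      by linarith [min_le_right (1 / 4) ((s.re - 1) / 2)]⟩
  simp_rw [← tsum_mul_left]
  refine tendsto_tsum_of_dominated_convergence
    ((summable_limit_majorant (20 + 1 / δ) hs hδs).mul_left A)
    (tendsto_sub_one_mul_seriesTerm s) ?_
  have hnear : ∀ᶠ w : ℂ in 𝓝[≠] 1, ‖w - 1‖ < δ := by
    filter_upwards [nhdsWithin_le_nhds (Metric.ball_mem_nhds (1 : ℂ) hδ)] with w hw
    rwa [mem_ball_iff_norm] at hw
  have hzeta : ∀ᶠ w : ℂ in 𝓝[≠] 1, ‖(w - 1) * riemannZeta w‖ < 2 :=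
    riemannZeta_residue_one.norm.eventually_lt_const (by norm_num)
  filter_upwards [hnear, hzeta, self_mem_nhdsWithin] with w hw hζ hw1 n
  have hre : 3 / 2 ≤ (2 * w).re := by
    simp only [mul_re, re_ofNat, im_ofNat, zero_mul, sub_zero]
    linarith [one_sub_norm_sub_one_le_re w]
  exact norm_sub_one_mul_seriesTerm_le hδ hδ1 (hA _ hre) hw hw1 hζ.le s n

end Limit

/-! ### Evaluation of the limit -/

section EulerProduct

/-- The coefficients `∏_{p ∣ k} (1 + p⁻¹)⁻¹ · k^{-z}`, supported on odd `k`, of the Dirichlet series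
to which the squares `n = k²` contribute (with `z = 2s`) in the limit `w → 1`. -/
def oddCoeff (z : ℂ) (k : ℕ) : ℂ :=
  if Odd k then (∏ p ∈ k.primeFactors, (1 + (p : ℂ)⁻¹)⁻¹) * (k : ℂ) ^ (-z) else 0

lemma oddCoeff_of_odd (z : ℂ) {k : ℕ} (hk : Odd k) :
    oddCoeff z k = (∏ p ∈ k.primeFactors, (1 + (p : ℂ)⁻¹)⁻¹) * (k : ℂ) ^ (-z) :=
  if_pos hk

lemma oddCoeff_of_not_odd (z : ℂ) {k : ℕ} (hk : ¬ Odd k) : oddCoeff z k = 0 :=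
  if_neg hk

lemma one_sub_inv_mul_inv_one_sub_cpow_neg_two {p : ℕ} (hp : 2 ≤ p) :
    (1 - (p : ℂ)⁻¹) * (1 - (p : ℂ) ^ (-2 : ℂ))⁻¹ = (1 + (p : ℂ)⁻¹)⁻¹ := by
  have hne : 1 - (p : ℂ)⁻¹ ≠ 0 := by
    rw [sub_ne_zero, ne_comm, Ne, inv_eq_one]
    exact_mod_cast (by lia : p ≠ 1)
  have hfactor : 1 - (p : ℂ) ^ (-2 : ℂ) = (1 - (p : ℂ)⁻¹) * (1 + (p : ℂ)⁻¹) := by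
    rw [cpow_neg, cpow_ofNat]
    ring
  rw [hfactor, mul_inv, mul_inv_cancel_left₀ hne]

lemma χ₈_natCast_mul_self {k : ℕ} (hk : Odd k) : ZMod.χ₈ (k * k : ℕ) = 1 := by
  have hunit : IsUnit (k : ZMod 8) :=
    (ZMod.isUnit_iff_coprime k 8).2 ((Nat.coprime_two_right.2 hk).pow_right 3)
  rw [Nat.cast_mul, map_mul, ← sq, ← MulChar.pow_apply' _ two_ne_zero,
    ZMod.isQuadratic_χ₈.sq_eq_one, MulChar.one_apply hunit]

lemma limitTerm_mul_self (s : ℂ) (k : ℕ) :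
    limitTerm s (k * k) = 2 / 3 * oddCoeff (2 * s) k := by
  by_cases hk : Odd k
  swap
  · have hresidue : kroneckerResidue (k * k) = 0 := if_neg fun h ↦ hk (Nat.odd_mul.1 h.1).1
    rw [limitTerm, hresidue, oddCoeff_of_not_odd _ hk]
    ring
  have hk0 : (k : ℂ) ≠ 0 := by exact_mod_cast hk.pos.ne'
  have hfactors : (4 * (k * k)).primeFactors = insert 2 k.primeFactors := by
    rw [primeFactors_four_mul_mul_self, Nat.primeFactors_mul two_ne_zero hk.pos.ne',
      Nat.prime_two.primeFactors, Finset.insert_eq]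
  have htwo : 2 ∉ k.primeFactors := fun h ↦
    hk.not_two_dvd_nat (Nat.dvd_of_mem_primeFactors h)
  have hprod : kroneckerResidue (k * k) * aF 2 (4 * (k * k))
      = 2 / 3 * ∏ p ∈ k.primeFactors, (1 + (p : ℂ)⁻¹)⁻¹ := by
    rw [kroneckerResidue, if_pos ⟨hk.mul hk, k, rfl⟩, aF, ← Finset.prod_mul_distrib,
      Finset.prod_congr rfl fun p hp ↦ one_sub_inv_mul_inv_one_sub_cpow_neg_two
        (Nat.prime_of_mem_primeFactors hp).two_le, hfactors, Finset.prod_insert htwo]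
    norm_num
  have hpow : ((k * k : ℕ) : ℂ) ^ (-s) = (k : ℂ) ^ (-(2 * s)) := by
    rw [Nat.cast_mul, natCast_mul_natCast_cpow, ← cpow_add _ _ hk0, ← two_mul, mul_neg]
  rw [limitTerm, χ₈_natCast_mul_self hk, Int.cast_one, one_mul, hprod, hpow, oddCoeff_of_odd _ hk,
    mul_assoc]

lemma tsum_limitTerm (s : ℂ) : ∑' n, limitTerm s n = 2 / 3 * ∑' k, oddCoeff (2 * s) k := by
  rw [← tsum_mul_left, ← mul_self_injective_nat.tsum_eq (f := limitTerm s)]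
  · exact tsum_congr (limitTerm_mul_self s)
  · intro n hn
    by_contra hrange
    have hresidue : kroneckerResidue n = 0 :=
      if_neg fun ⟨_, k, hk⟩ ↦ hrange ⟨k, hk.symm⟩
    exact hn (by rw [limitTerm, hresidue]; ring)

lemma oddCoeff_one (z : ℂ) : oddCoeff z 1 = 1 := by simp [oddCoeff]

lemma oddCoeff_mul (z : ℂ) {m n : ℕ} (h : m.Coprime n) :
    oddCoeff z (m * n) = oddCoeff z m * oddCoeff z n := by
  by_cases hmn : Odd m ∧ Odd n
  · rw [oddCoeff_of_odd z hmn.1, oddCoeff_of_odd z hmn.2, oddCoeff_of_odd z (hmn.1.mul hmn.2),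
      h.primeFactors_mul, Finset.prod_union h.disjoint_primeFactors, Nat.cast_mul,
      natCast_mul_natCast_cpow]
    ring
  · rw [oddCoeff_of_not_odd z (Nat.odd_mul.not.2 hmn)]
    rcases not_and_or.1 hmn with h | h <;> simp [oddCoeff_of_not_odd z h]

lemma norm_inv_one_add_natCast_inv_le_one (p : ℕ) : ‖(1 + (p : ℂ)⁻¹)⁻¹‖ ≤ 1 := by
  have hreal : 1 + (p : ℂ)⁻¹ = ((1 + (p : ℝ)⁻¹ : ℝ) : ℂ) := by push_cast; rfl
  have hpos : (0 : ℝ) ≤ (p : ℝ)⁻¹ := by positivity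
  rw [norm_inv, hreal, norm_real, Real.norm_of_nonneg (by positivity)]
  exact inv_le_one_of_one_le₀ (by linarith)

lemma summable_norm_oddCoeff {z : ℂ} (hz : 1 < z.re) : Summable fun k ↦ ‖oddCoeff z k‖ := by
  refine .of_nonneg_of_le (fun _ ↦ norm_nonneg _) (fun k ↦ ?_)
    (Real.summable_nat_rpow.2 (neg_lt_neg hz))
  by_cases hk : Odd k
  · rw [oddCoeff_of_odd z hk, norm_mul, norm_prod, norm_natCast_cpow_of_pos hk.pos, neg_re]
    exact mul_le_of_le_one_left (by positivity)
      (Finset.prod_le_one (fun _ _ ↦ norm_nonneg _) fun p _ ↦ norm_inv_one_add_natCast_inv_le_one p)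
  · rw [oddCoeff_of_not_odd z hk, norm_zero]
    positivity

lemma oddCoeff_pow_succ (z : ℂ) {p : ℕ} (hp : p.Prime) (hp2 : p ≠ 2) (e : ℕ) :
    oddCoeff z (p ^ (e + 1))
      = (1 + (p : ℂ)⁻¹)⁻¹ * (p : ℂ) ^ (-z) * ((p : ℂ) ^ (-z)) ^ e := by
  rw [oddCoeff_of_odd z (hp.odd_of_ne_two hp2).pow, Nat.primeFactors_prime_pow e.succ_ne_zero hp,
    Finset.prod_singleton, mul_assoc, ← pow_succ', Nat.cast_pow, ← natCast_cpow_natCast_mul,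
    cpow_nat_mul]

lemma tsum_oddCoeff_pow_of_ne_two {z : ℂ} (hz : 1 < z.re) {p : ℕ} (hp : p.Prime) (hp2 : p ≠ 2) :
    ∑' e : ℕ, oddCoeff z (p ^ e)
      = (1 - (p : ℂ) ^ (-z))⁻¹ * (1 - 1 / ((p : ℂ) ^ z * (p + 1))) := by
  have hp0 : (p : ℂ) ≠ 0 := by exact_mod_cast hp.ne_zero
  have hp1 : (p : ℂ) + 1 ≠ 0 := by exact_mod_cast p.succ_ne_zero
  have hx : ‖(p : ℂ) ^ (-z)‖ < 1 :=
    (norm_prime_cpow_le_one_half ⟨p, hp⟩ hz).trans_lt (by norm_num)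
  have : (p : ℂ) ^ (-z) ≠ 0 := by simp [cpow_eq_zero_iff, hp0]
  have hx1 : 1 - (p : ℂ) ^ (-z) ≠ 0 := one_sub_prime_cpow_ne_zero hp hz
  have hinv : (1 + (p : ℂ)⁻¹)⁻¹ = p / (p + 1) := by field_simp
  have hpow : (p : ℂ) ^ z = ((p : ℂ) ^ (-z))⁻¹ := by rw [cpow_neg, inv_inv]
  have hsucc : HasSum (fun e ↦ oddCoeff z (p ^ (e + 1)))
      ((1 + (p : ℂ)⁻¹)⁻¹ * (p : ℂ) ^ (-z) * (1 - (p : ℂ) ^ (-z))⁻¹) := by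
    simpa only [oddCoeff_pow_succ z hp hp2] using
      (hasSum_geometric_of_norm_lt_one hx).mul_left ((1 + (p : ℂ)⁻¹)⁻¹ * (p : ℂ) ^ (-z))
  rw [(HasSum.zero_add (f := fun e ↦ oddCoeff z (p ^ e)) hsucc).tsum_eq, pow_zero, oddCoeff_one,
    hinv, hpow]
  field_simp
  ring

lemma tsum_oddCoeff_two_pow (z : ℂ) : ∑' e : ℕ, oddCoeff z (2 ^ e) = 1 := by
  rw [tsum_eq_single 0, pow_zero, oddCoeff_one]
  exact fun e he ↦ oddCoeff_of_not_odd z (Nat.not_odd_iff_even.2 (Nat.even_pow.2 ⟨even_two, he⟩))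

lemma tsum_oddCoeff_pow {z : ℂ} (hz : 1 < z.re) {p : ℕ} (hp : p.Prime) :
    ∑' e : ℕ, oddCoeff z (p ^ e) = (1 - (p : ℂ) ^ (-z))⁻¹ *
      if p = 2 then 1 - (2 : ℂ) ^ (-z) else 1 - 1 / ((p : ℂ) ^ z * (p + 1)) := by
  split_ifs with h
  · subst h
    rw [tsum_oddCoeff_two_pow, ← Nat.cast_ofNat (R := ℂ),
      inv_mul_cancel₀ (one_sub_prime_cpow_ne_zero Nat.prime_two hz)]
  · exact tsum_oddCoeff_pow_of_ne_two hz hp h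

lemma hasProd_primes_ite_eq_two {M : Type*} [CommMonoid M] [TopologicalSpace M] [ContinuousMul M]
    (a : M) {f : ℕ → M} (hf : Multipliable fun p : {p : ℕ // p.Prime ∧ 2 < p} ↦ f p) :
    HasProd (fun p : Nat.Primes ↦ if (p : ℕ) = 2 then a else f p)
      (a * ∏' p : {p : ℕ // p.Prime ∧ 2 < p}, f p) := by
  let incl : {p : ℕ // p.Prime ∧ 2 < p} → Nat.Primes := fun q ↦ ⟨q.1, q.2.1⟩
  have hincl : Function.Injective incl := fun p q h ↦
    Subtype.ext (congrArg (fun r : Nat.Primes ↦ (r : ℕ)) h)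
  have htwo : HasProd (fun p : Nat.Primes ↦ if (p : ℕ) = 2 then a else 1) a := by
    have h := hasProd_single (f := fun p : Nat.Primes ↦ if (p : ℕ) = 2 then a else 1)
      ⟨2, Nat.prime_two⟩ fun p hp ↦ if_neg fun h ↦ hp (Subtype.ext h)
    simpa only [if_true] using h
  have hodd : HasProd (fun p : Nat.Primes ↦ if (p : ℕ) = 2 then 1 else f p)
      (∏' p : {p : ℕ // p.Prime ∧ 2 < p}, f p) := by
    refine (hincl.hasProd_iff fun p hp ↦ if_pos ?_).1
      (hf.hasProd.congr_fun fun q ↦ if_neg q.2.2.ne')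
    by_contra h
    exact hp ⟨⟨p, p.2, lt_of_le_of_ne p.2.two_le (Ne.symm h)⟩, rfl⟩
  refine (htwo.mul hodd).congr_fun fun p ↦ ?_
  split_ifs <;> simp

lemma multipliable_one_sub_one_div_natCast_cpow_mul {z : ℂ} (hz : 1 < z.re) :
    Multipliable fun p : {p : ℕ // p.Prime ∧ 2 < p} ↦ 1 - 1 / ((p : ℂ) ^ z * (p + 1)) := by
  simp only [sub_eq_add_neg]
  refine multipliable_one_add_of_summable (.of_nonneg_of_le (fun _ ↦ norm_nonneg _) (fun p ↦ ?_)
    ((Real.summable_nat_rpow.2 (neg_lt_neg hz)).comp_injective Subtype.val_injective))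
  have hp : 0 < (p : ℕ) := p.2.1.pos
  have hp' : (0 : ℝ) < (p : ℕ) := by exact_mod_cast hp
  have hsucc : ‖((p : ℕ) : ℂ) + 1‖ = (p : ℕ) + 1 := by
    rw [← Nat.cast_succ, norm_natCast, Nat.cast_succ]
  rw [norm_neg, norm_div, norm_one, norm_mul, norm_natCast_cpow_of_pos hp, hsucc,
    Function.comp_apply, Real.rpow_neg hp'.le, ← one_div]
  exact one_div_le_one_div_of_le (by positivity)
    (le_mul_of_one_le_right (by positivity) (by linarith))

theorem tsum_oddCoeff {z : ℂ} (hz : 1 < z.re) :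
    ∑' k, oddCoeff z k = riemannZeta z * ((1 - (2 : ℂ) ^ (-z)) *
      ∏' p : {p : ℕ // p.Prime ∧ 2 < p}, (1 - 1 / ((p : ℂ) ^ z * (p + 1)))) := by
  have hcoeff := EulerProduct.eulerProduct_hasProd (oddCoeff_one z) (oddCoeff_mul z)
    (summable_norm_oddCoeff hz) (oddCoeff_of_not_odd z (by decide))
  refine hcoeff.unique (((riemannZeta_eulerProduct_hasProd hz).mul
    (hasProd_primes_ite_eq_two (1 - (2 : ℂ) ^ (-z))
      (f := fun p ↦ 1 - 1 / ((p : ℂ) ^ z * (p + 1)))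
      (multipliable_one_sub_one_div_natCast_cpow_mul hz))).congr_fun fun p ↦ ?_)
  exact tsum_oddCoeff_pow hz p.2

end EulerProduct

/-- the series `F(w) = Σ_{n odd} χ₈(n) L(w,(·/4n)) a_{2w}(4n) n^{-s}` converges
absolutely for `Re w > 3/4`, `w ≠ 1`, and `(w-1)F(w)` tends to
`(2/3) ζ(2s) (1-2^{-2s}) ∏_{p>2}(1 - 1/(p^{2s}(p+1)))` as `w → 1` in that region. -/
theorem statement13
    (ξ : (n : ℕ) → DirichletCharacter ℂ (4 * n))
    (hξ : ∀ n : ℕ, Odd n →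
      (∀ m : ℕ, Odd m → ξ n (m : ZMod (4 * n)) = ((jacobiSym (m : ℤ) n : ℤ) : ℂ)) ∧
      (∀ m : ℕ, Even m → ξ n (m : ZMod (4 * n)) = 0))
    (s : ℂ) (hs : 1 < s.re)
    (F : ℂ → ℂ)
    (hF : ∀ w : ℂ, F w = ∑' n : ℕ, if h : Odd n then
        haveI : NeZero (4 * n) := ⟨by rcases h with ⟨k, rfl⟩; omega⟩
        ((ZMod.χ₈ (n : ZMod 8) : ℤ) : ℂ) * (ξ n).LFunction w * aF (2 * w) (4 * n) *
          (n : ℂ) ^ (-s) else 0) :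
    (∀ w : ℂ, 3 / 4 < w.re → w ≠ 1 →
      Summable (fun n : ℕ => ‖(if h : Odd n then
        haveI : NeZero (4 * n) := ⟨by rcases h with ⟨k, rfl⟩; omega⟩
        ((ZMod.χ₈ (n : ZMod 8) : ℤ) : ℂ) * (ξ n).LFunction w * aF (2 * w) (4 * n) *
          (n : ℂ) ^ (-s) else 0)‖)) ∧
    Tendsto (fun w : ℂ => (w - 1) * F w)
      (𝓝[{w : ℂ | 3 / 4 < w.re ∧ w ≠ 1}] 1)
      (𝓝 ((2 / 3) * riemannZeta (2 * s) * (1 - (2 : ℂ) ^ (-2 * s)) *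
        ∏' p : {p : ℕ // p.Prime ∧ 2 < p}, (1 - 1 / ((p : ℂ) ^ (2 * s) * ((p : ℕ) + 1))))) := by
  have hterm : ∀ w n, (if h : Odd n then
        haveI : NeZero (4 * n) := ⟨by rcases h with ⟨k, rfl⟩; omega⟩
        ((ZMod.χ₈ (n : ZMod 8) : ℤ) : ℂ) * (ξ n).LFunction w * aF (2 * w) (4 * n) *
          (n : ℂ) ^ (-s) else 0) = seriesTerm s w n := by
    intro w n
    split_ifs with h
    · have : NeZero n := ⟨h.pos.ne'⟩
      rw [seriesTerm_of_odd s w h, eq_kroneckerChar (hξ n h).1 (hξ n h).2]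
    · rw [seriesTerm_of_even s w (Nat.not_odd_iff_even.1 h)]
  simp only [hterm] at hF ⊢
  refine ⟨fun w hw hw1 ↦ summable_norm_seriesTerm hs hw hw1, ?_⟩
  have hlim := tendsto_sub_one_mul_tsum_seriesTerm hs
  have hs2 : 1 < (2 * s).re := by
    simp only [mul_re, re_ofNat, im_ofNat, zero_mul, sub_zero]
    linarith
  rw [tsum_limitTerm, tsum_oddCoeff hs2, ← neg_mul, ← mul_assoc, ← mul_assoc] at hlim
  simp only [hF]
  exact hlim.mono_left (nhdsWithin_mono 1 fun w hw ↦ hw.2)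
end
end

section
/- For every s ∈ ℂ with Re s > 1/2, the series and products below converge absolutely and Σ_{n odd ≥ 1} (∏_{p | n} p/(p+1)) · n^{−2s} = ζ(2s)·(1 − 2^{−2s}) · ∏_{p > 2 prime} (1 − 1/(p^{2s}(p+1))). -/
/-!
Let `f` be completely multiplicative and absolutely summable, and multiply `f n` by
`∏_{p ∣ n} c p`. The Euler factor at `p` becomes
`1 + c p * (f p + f p ^ 2 + ⋯) = (1 - (1 - c p) * f p) / (1 - f p)`, so the sum of the twisted
series is the sum of `f` times `∏_p (1 - (1 - c p) * f p)`.

Restricting a sum to odd `n` is itself such a twist, with `c 2 = 0`. Taking `f n = n ^ (-2s)` and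
`c p = p / (p + 1)` for odd `p` gives the theorem: the correction factor is `1 - 2 ^ (-2s)` at `2`
and `1 - 1 / (p ^ (2s) * (p + 1))` at odd `p`.
-/

open Complex
open ArithmeticFunction (prodPrimeFactors prodPrimeFactors_apply IsMultiplicative)

section Twist

lemma prodPrimeFactors_prime_pow {R : Type*} [CommMonoidWithZero R] (c : ℕ → R) {p k : ℕ}
    (hp : p.Prime) (hk : k ≠ 0) : prodPrimeFactors c (p ^ k) = c p := by
  rw [prodPrimeFactors_apply (pow_ne_zero k hp.ne_zero), Nat.primeFactors_prime_pow hk hp,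
    Finset.prod_singleton]

section NormedCommRing

variable {R : Type*} [NormedCommRing R] [NormOneClass R]

lemma norm_prodPrimeFactors_le_one {c : ℕ → R} (hc : ∀ p, p.Prime → ‖c p‖ ≤ 1) (n : ℕ) :
    ‖prodPrimeFactors c n‖ ≤ 1 := by
  rcases eq_or_ne n 0 with rfl | hn
  · simp
  · rw [prodPrimeFactors_apply hn]
    exact (Finset.norm_prod_le _ _).trans <| Finset.prod_le_one (fun _ _ ↦ norm_nonneg _)
      fun p hp ↦ hc p (Nat.prime_of_mem_primeFactors hp)

lemma summable_norm_prodPrimeFactors_mul {c f : ℕ → R} (hf : Summable (‖f ·‖))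
    (hc : ∀ p, p.Prime → ‖c p‖ ≤ 1) : Summable fun n ↦ ‖prodPrimeFactors c n * f n‖ :=
  hf.of_nonneg_of_le (fun _ ↦ norm_nonneg _) fun n ↦ (norm_mul_le _ _).trans <|
    mul_le_of_le_one_left (norm_nonneg _) (norm_prodPrimeFactors_le_one hc n)

lemma multipliable_one_sub_one_sub_mul [CompleteSpace R] {ι : Type*} {c f : ι → R}
    (hf : Summable (‖f ·‖)) (hc : ∀ i, ‖c i‖ ≤ 1) :
    Multipliable fun i ↦ 1 - (1 - c i) * f i := by
  have hsum : Summable fun i ↦ ‖-((1 - c i) * f i)‖ := by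
    refine (hf.mul_left 2).of_nonneg_of_le (fun _ ↦ norm_nonneg _) fun i ↦ ?_
    have h_two : ‖1 - c i‖ ≤ 2 := by
      linarith [norm_sub_le 1 (c i), hc i, norm_one (α := R)]
    rw [norm_neg]
    exact norm_mul_le_of_le h_two le_rfl
  simpa only [sub_eq_add_neg] using multipliable_one_add_of_summable hsum

end NormedCommRing

variable {F : Type*} [NormedField F]

lemma hasSum_prodPrimeFactors_mul_prime_pow (c : ℕ → F) (f : ℕ →*₀ F) {p : ℕ} (hp : p.Prime)
    (hfp : ‖f p‖ < 1) :
    HasSum (fun k ↦ prodPrimeFactors c (p ^ k) * f (p ^ k))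
      ((1 - f p)⁻¹ * (1 - (1 - c p) * f p)) := by
  have h_term (k : ℕ) : prodPrimeFactors c (p ^ (k + 1)) * f (p ^ (k + 1)) =
      c p * f p * f p ^ k := by
    rw [prodPrimeFactors_prime_pow c hp k.succ_ne_zero, map_pow, pow_succ', mul_assoc]
  have h_tail : HasSum (fun k ↦ prodPrimeFactors c (p ^ (k + 1)) * f (p ^ (k + 1)))
      (c p * f p * (1 - f p)⁻¹) := by
    simpa only [h_term] using (hasSum_geometric_of_norm_lt_one hfp).mul_left (c p * f p)
  have h_ne : 1 - f p ≠ 0 := sub_ne_zero.mpr fun h ↦ by simp [← h] at hfp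
  have h_value : prodPrimeFactors c (p ^ 0) * f (p ^ 0) + c p * f p * (1 - f p)⁻¹ =
      (1 - f p)⁻¹ * (1 - (1 - c p) * f p) := by
    rw [pow_zero, (IsMultiplicative.prodPrimeFactors c).map_one, map_one]
    field_simp
    ring
  exact h_value ▸ h_tail.zero_add

theorem tsum_prodPrimeFactors_mul [CompleteSpace F] {c : ℕ → F} {f : ℕ →*₀ F}
    (hf : Summable (‖f ·‖)) (hc : ∀ p, p.Prime → ‖c p‖ ≤ 1) :
    ∑' n, prodPrimeFactors c n * f n =
      (∑' n, f n) * ∏' p : Nat.Primes, (1 - (1 - c p) * f p) := by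
  have h_mult := IsMultiplicative.prodPrimeFactors c
  have h_twist := EulerProduct.eulerProduct_hasProd (f := fun n ↦ prodPrimeFactors c n * f n)
    (by simp [h_mult.map_one])
    (fun hmn ↦ by rw [h_mult.map_mul_of_coprime hmn, map_mul, mul_mul_mul_comm])
    (summable_norm_prodPrimeFactors_mul hf hc) (by simp)
  have h_untwisted := EulerProduct.eulerProduct_completely_multiplicative_hasProd hf
  have h_correction : Multipliable fun p : Nat.Primes ↦ 1 - (1 - c p) * f p :=
    multipliable_one_sub_one_sub_mul (hf.comp_injective Subtype.val_injective)
      fun p ↦ hc p p.prop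
  refine h_twist.unique ((h_untwisted.mul h_correction.hasProd).congr_fun fun p ↦ ?_)
  exact (hasSum_prodPrimeFactors_mul_prime_pow c f p.prop
    (hf.of_norm.norm_lt_one (f := (f : ℕ →* F)) p.prop.one_lt)).tsum_eq

end Twist

lemma tprod_primes_eq_mul_tprod_two_lt {R : Type*} [CommMonoid R] [TopologicalSpace R]
    [ContinuousMul R] [T2Space R] {g : ℕ → R}
    (hg : Multipliable fun p : {p : ℕ // p.Prime ∧ 2 < p} ↦ g p) :
    ∏' p : Nat.Primes, g p = g 2 * ∏' p : {p : ℕ // p.Prime ∧ 2 < p}, g p := by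
  have h_primes : {p : ℕ | p.Prime} = {2} ∪ {p | p.Prime ∧ 2 < p} := by
    ext p
    constructor
    · exact fun hp ↦ hp.two_le.eq_or_lt.imp Eq.symm (And.intro hp)
    · rintro (rfl | hp)
      exacts [Nat.prime_two, hp.1]
  have h_disjoint : Disjoint {2} {p : ℕ | p.Prime ∧ 2 < p} := by simp
  have h_prod := (hasProd_singleton 2 g).mul_disjoint h_disjoint hg.hasProd
  rw [← h_primes] at h_prod
  exact h_prod.tprod_eq

/-- The weights `c` on primes for which `∏_{p ∣ n} c p` is `∏_{p ∣ n} p / (p + 1)` at odd `n` and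
vanishes at even `n`. Only the values at primes matter. -/
noncomputable def oddPrimeWeight (p : ℕ) : ℂ := if p = 2 then 0 else p / (p + 1)

lemma oddPrimeWeight_two : oddPrimeWeight 2 = 0 := if_pos rfl

lemma oddPrimeWeight_of_ne_two {p : ℕ} (hp : p ≠ 2) : oddPrimeWeight p = p / (p + 1) := if_neg hp

lemma norm_oddPrimeWeight_le_one (p : ℕ) : ‖oddPrimeWeight p‖ ≤ 1 := by
  rcases eq_or_ne p 2 with rfl | hp
  · simp [oddPrimeWeight_two]
  · rw [oddPrimeWeight_of_ne_two hp, ← Nat.cast_succ, norm_div, norm_natCast, norm_natCast]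
    exact div_le_one_of_le₀ (by simp) (Nat.cast_nonneg _)

lemma prodPrimeFactors_oddPrimeWeight (n : ℕ) :
    prodPrimeFactors oddPrimeWeight n =
      if Odd n then ∏ p ∈ n.primeFactors, (p : ℂ) / (p + 1) else 0 := by
  rcases eq_or_ne n 0 with rfl | hn
  · simp
  rw [prodPrimeFactors_apply hn]
  split_ifs with hodd
  · refine Finset.prod_congr rfl fun p hp ↦ oddPrimeWeight_of_ne_two ?_
    rintro rfl
    exact hodd.not_two_dvd_nat (Nat.dvd_of_mem_primeFactors hp)
  · have h_two : 2 ∈ n.primeFactors :=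
      Nat.prime_two.mem_primeFactors (Nat.not_odd_iff_even.mp hodd).two_dvd hn
    exact Finset.prod_eq_zero h_two oddPrimeWeight_two

lemma one_sub_oddPrimeWeight_mul_cpow_neg {p : ℕ} (hp : p ≠ 2) (z : ℂ) :
    (1 - oddPrimeWeight p) * (p : ℂ) ^ (-z) = 1 / ((p : ℂ) ^ z * (p + 1)) := by
  have h_ne : (p : ℂ) + 1 ≠ 0 := Nat.cast_add_one_ne_zero p
  have h_weight : 1 - (p : ℂ) / (p + 1) = 1 / (p + 1) := by
    field_simp
    ring
  rw [oddPrimeWeight_of_ne_two hp, h_weight, cpow_neg, ← one_div, one_div_mul_one_div, mul_comm]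

/-- `Σ_{n odd} (∏_{p|n} p/(p+1)) n^{-2s} = ζ(2s)(1-2^{-2s}) ∏_{p>2}(1-1/(p^{2s}(p+1)))`
for `Re s > 1/2`, all series/products converging absolutely. -/
theorem statement14 (s : ℂ) (hs : 1 / 2 < s.re) :
    Summable (fun n : ℕ => ‖(if Odd n then
        (∏ p ∈ n.primeFactors, (p : ℂ) / ((p : ℂ) + 1)) * (n : ℂ) ^ (-(2 * s)) else 0)‖) ∧
    Multipliable (fun p : {p : ℕ // p.Prime ∧ 2 < p} =>
        (1 - 1 / (((p : ℕ) : ℂ) ^ (2 * s) * (((p : ℕ) : ℂ) + 1)))) ∧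
    (∑' n : ℕ, if Odd n then
        (∏ p ∈ n.primeFactors, (p : ℂ) / ((p : ℂ) + 1)) * (n : ℂ) ^ (-(2 * s)) else 0) =
      riemannZeta (2 * s) * (1 - (2 : ℂ) ^ (-(2 * s))) *
        ∏' p : {p : ℕ // p.Prime ∧ 2 < p},
          (1 - 1 / (((p : ℕ) : ℂ) ^ (2 * s) * (((p : ℕ) : ℂ) + 1))) := by
  have hz : 1 < (2 * s).re := by simp only [mul_re, re_ofNat, im_ofNat]; linarith
  let f := riemannZetaSummandHom (ne_zero_of_one_lt_re hz)
  have hf : Summable (‖f ·‖) := summable_riemannZetaSummand hz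
  have hc (p : ℕ) (_ : p.Prime) := norm_oddPrimeWeight_le_one p
  have h_term (n : ℕ) : (if Odd n then
      (∏ p ∈ n.primeFactors, (p : ℂ) / (p + 1)) * (n : ℂ) ^ (-(2 * s)) else 0) =
      prodPrimeFactors oddPrimeWeight n * f n := by
    rw [prodPrimeFactors_oddPrimeWeight, ite_mul, zero_mul]; rfl
  have h_factor (p : {p : ℕ // p.Prime ∧ 2 < p}) :
      1 - 1 / (((p : ℕ) : ℂ) ^ (2 * s) * ((p : ℕ) + 1)) = 1 - (1 - oddPrimeWeight p) * f p :=
    congrArg (1 - ·) (one_sub_oddPrimeWeight_mul_cpow_neg p.prop.2.ne' (2 * s)).symm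
  have h_mult : Multipliable fun p : {p : ℕ // p.Prime ∧ 2 < p} ↦
      1 - (1 - oddPrimeWeight p) * f p :=
    multipliable_one_sub_one_sub_mul (hf.comp_injective Subtype.val_injective)
      fun p ↦ norm_oddPrimeWeight_le_one p
  simp only [h_term, h_factor]
  refine ⟨summable_norm_prodPrimeFactors_mul hf hc, h_mult, ?_⟩
  rw [tsum_prodPrimeFactors_mul hf hc, tsum_riemannZetaSummand hz,
    tprod_primes_eq_mul_tprod_two_lt (g := fun p ↦ 1 - (1 - oddPrimeWeight p) * f p) h_mult,
    oddPrimeWeight_two, sub_zero, one_mul, ← mul_assoc]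
  rfl
end

section
/- Let χ be a Dirichlet character (of any modulus) and let s, t ∈ ℂ with Re s > 1 and Re t > 1. Define E₁(s,t;χ) := ∏_{p prime} (1 + (χ(p)·p^s − χ(p)²·p^t + χ(p)²)/((p^{s+t}+χ(p))·(p^s+χ(p))·(p^t−1))) and recursively E_{N+1}(s,t;χ) := E_N(s,t;χ)·∏_{p prime}(1 + χ(p)·p^{−(s+(N+1)t)})^{−1} for N ≥ 1. Then for every N ≥ 1 all the products involved converge absolutely and ∏_{p prime} (1 + χ(p)/((p^s+χ(p))·(p^t−1))) = ( ∏_{j=1}^{N} L(s+jt, χ)/L(2s+2jt, χ²) ) · E_N(s,t;χ). -/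
open Complex

noncomputable section

/-- The Euler products `E_N(s,t;f)` (`f` the values of the character), defined by the recursion
`E₁` explicit and `E_{N+1} = E_N · ∏_p (1 + f(p) p^{-(s+(N+1)t)})⁻¹`. -/
def Erec (f : ℕ → ℂ) (s t : ℂ) : ℕ → ℂ
  | 0 => 1
  | 1 => ∏' p : Nat.Primes,
      (1 + (f p * ((p : ℕ) : ℂ) ^ s - (f p) ^ 2 * ((p : ℕ) : ℂ) ^ t + (f p) ^ 2) /
        ((((p : ℕ) : ℂ) ^ (s + t) + f p) * (((p : ℕ) : ℂ) ^ s + f p) * (((p : ℕ) : ℂ) ^ t - 1)))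
  | (N + 2) => Erec f s t (N + 1) *
      ∏' p : Nat.Primes, (1 + f p * ((p : ℕ) : ℂ) ^ (-(s + ((N : ℕ) + 2) * t)))⁻¹

/-!
Since `L(u, χ) / L(2u, χ²)` has the Euler product `∏_p (1 + χ(p) p^{-u})`, the identity amounts to
stripping the factors `1 + χ(p) p^{-(s + jt)}` off the left-hand side, one `j` at a time.
For `j = 1` this is, prime by prime, the rational identity `one_add_div_mul_inv_one_add` with
`x = p^s`, `y = p^t`, `a = χ(p)`; for `j ≥ 2` it is the recursion defining `E_N`.
-/

section PrimePowers

variable {u a : ℂ}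

lemma prime_cpow_ne_zero (p : Nat.Primes) (u : ℂ) : (p : ℂ) ^ u ≠ 0 :=
  norm_pos_iff.mp (norm_natCast_cpow_pos_of_pos p.prop.pos u)

lemma one_lt_norm_prime_cpow (p : Nat.Primes) (hu : 0 < u.re) : 1 < ‖(p : ℂ) ^ u‖ := by
  rw [norm_natCast_cpow_of_pos p.prop.pos]
  exact Real.one_lt_rpow (mod_cast p.prop.one_lt) hu

lemma summable_norm_prime_cpow_neg (hu : 1 < u.re) :
    Summable fun p : Nat.Primes ↦ ‖(p : ℂ) ^ (-u)‖ := by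
  refine (Nat.Primes.summable_rpow.mpr (neg_lt_neg hu)).congr fun p ↦ ?_
  rw [norm_natCast_cpow_of_pos p.prop.pos, neg_re]

lemma prime_cpow_add_ne_zero (p : Nat.Primes) (hu : 0 < u.re) (ha : ‖a‖ ≤ 1) :
    (p : ℂ) ^ u + a ≠ 0 := by
  intro h
  have hp := one_lt_norm_prime_cpow p hu
  rw [eq_neg_of_add_eq_zero_left h, norm_neg] at hp
  exact hp.not_ge ha

lemma one_add_mul_prime_cpow_neg_ne_zero (p : Nat.Primes) (hu : 0 < u.re) (ha : ‖a‖ ≤ 1) :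
    1 + a * (p : ℂ) ^ (-u) ≠ 0 := by
  rw [cpow_neg, ← div_eq_mul_inv, one_add_div (prime_cpow_ne_zero p u)]
  exact div_ne_zero (prime_cpow_add_ne_zero p hu ha) (prime_cpow_ne_zero p u)

lemma one_sub_two_rpow_neg_pos {r : ℝ} (hr : 0 < r) : 0 < 1 - (2 : ℝ) ^ (-r) :=
  sub_pos.mpr (Real.rpow_lt_one_of_one_lt_of_neg one_lt_two (neg_neg_of_pos hr))

lemma mul_norm_prime_cpow_le_norm_add (p : Nat.Primes) (hu : 0 ≤ u.re) (ha : ‖a‖ ≤ 1) :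
    (1 - 2 ^ (-u.re)) * ‖(p : ℂ) ^ u‖ ≤ ‖(p : ℂ) ^ u + a‖ := by
  have hp : 1 ≤ (2 : ℝ) ^ (-u.re) * ‖(p : ℂ) ^ u‖ := by
    rw [norm_natCast_cpow_of_pos p.prop.pos, Real.rpow_neg zero_le_two, inv_mul_eq_div,
      one_le_div (by positivity)]
    exact Real.rpow_le_rpow zero_le_two (mod_cast p.prop.two_le) hu
  calc (1 - 2 ^ (-u.re)) * ‖(p : ℂ) ^ u‖
      ≤ ‖(p : ℂ) ^ u‖ - ‖a‖ := by linarith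
    _ ≤ ‖(p : ℂ) ^ u + a‖ := by simpa using norm_sub_norm_le ((p : ℂ) ^ u) (-a)

end PrimePowers

lemma one_add_div_mul_inv_one_add {K : Type*} [Field K] {x y a : K} (hx : x ≠ 0) (hy : y ≠ 0)
    (hxa : x + a ≠ 0) (hy1 : y - 1 ≠ 0) (hxya : x * y + a ≠ 0) :
    (1 + a / ((x + a) * (y - 1))) * (1 + a * (x * y)⁻¹)⁻¹ =
      1 + (a * x - a ^ 2 * y + a ^ 2) / ((x * y + a) * (x + a) * (y - 1)) := by
  have hinv : (1 + a * (x * y)⁻¹)⁻¹ = x * y / (x * y + a) := by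
    field_simp
  rw [hinv]
  field_simp
  ring

section EulerProducts

/-- The Euler factor at `p` of the product to be evaluated, for general coefficients `f`. -/
def baseFactor (f : ℕ → ℂ) (s t : ℂ) (p : Nat.Primes) : ℂ :=
  1 + f p / (((p : ℂ) ^ s + f p) * ((p : ℂ) ^ t - 1))

/-- The Euler factor at `p` of `E₁(s,t;f)`, that is, of `Erec f s t 1`. -/
def firstErecFactor (f : ℕ → ℂ) (s t : ℂ) (p : Nat.Primes) : ℂ :=
  1 + (f p * (p : ℂ) ^ s - f p ^ 2 * (p : ℂ) ^ t + f p ^ 2) /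
    (((p : ℂ) ^ (s + t) + f p) * ((p : ℂ) ^ s + f p) * ((p : ℂ) ^ t - 1))

/-- The Euler product `∏_p (1 + f(p) p^{-u})`, equal to `L(u, f) / L(2u, f²)` when `f` is a
Dirichlet character and `Re u > 1`. -/
def onePlusProduct (f : ℕ → ℂ) (u : ℂ) : ℂ :=
  ∏' p : Nat.Primes, (1 + f p * (p : ℂ) ^ (-u))

variable {f : ℕ → ℂ} {s t u : ℂ}

lemma summable_norm_mul_prime_cpow_neg (hf : ∀ p : Nat.Primes, ‖f p‖ ≤ 1) (hu : 1 < u.re) :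
    Summable fun p : Nat.Primes ↦ ‖f p * (p : ℂ) ^ (-u)‖ := by
  refine (summable_norm_prime_cpow_neg hu).of_nonneg_of_le (fun p ↦ norm_nonneg _) fun p ↦ ?_
  rw [norm_mul]
  exact mul_le_of_le_one_left (norm_nonneg _) (hf p)

lemma onePlusProduct_ne_zero (hf : ∀ p : Nat.Primes, ‖f p‖ ≤ 1) (hu : 1 < u.re) :
    onePlusProduct f u ≠ 0 :=
  tprod_one_add_ne_zero_of_summable
    (fun p ↦ one_add_mul_prime_cpow_neg_ne_zero p (zero_lt_one.trans hu) (hf p))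
    (summable_norm_mul_prime_cpow_neg hf hu)

lemma hasProd_inv_onePlusProduct (hf : ∀ p : Nat.Primes, ‖f p‖ ≤ 1) (hu : 1 < u.re) :
    HasProd (fun p : Nat.Primes ↦ (1 + f p * (p : ℂ) ^ (-u))⁻¹) (onePlusProduct f u)⁻¹ :=
  (multipliable_one_add_of_summable
    (summable_norm_mul_prime_cpow_neg hf hu)).hasProd.inv₀ (onePlusProduct_ne_zero hf hu)

lemma multipliable_baseFactor (hf : ∀ p : Nat.Primes, ‖f p‖ ≤ 1) (hs : 0 < s.re) (ht : 0 < t.re)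
    (hst : 1 < (s + t).re) : Multipliable (baseFactor f s t) := by
  have hcs := one_sub_two_rpow_neg_pos hs
  have hct := one_sub_two_rpow_neg_pos ht
  set cs : ℝ := 1 - 2 ^ (-s.re)
  set ct : ℝ := 1 - 2 ^ (-t.re)
  refine multipliable_one_add_of_summable <|
    ((summable_norm_prime_cpow_neg hst).mul_left (cs * ct)⁻¹).of_nonneg_of_le
      (fun p ↦ norm_nonneg _) fun p ↦ ?_
  have hp : (p : ℂ) ≠ 0 := mod_cast p.prop.ne_zero
  have hps : cs * ‖(p : ℂ) ^ s‖ ≤ ‖(p : ℂ) ^ s + f p‖ :=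
    mul_norm_prime_cpow_le_norm_add p hs.le (hf p)
  have hpt : ct * ‖(p : ℂ) ^ t‖ ≤ ‖(p : ℂ) ^ t - 1‖ := by
    rw [sub_eq_add_neg]
    exact mul_norm_prime_cpow_le_norm_add p ht.le (by simp)
  have hps0 : 0 < ‖(p : ℂ) ^ s‖ := norm_natCast_cpow_pos_of_pos p.prop.pos s
  have hpt0 : 0 < ‖(p : ℂ) ^ t‖ := norm_natCast_cpow_pos_of_pos p.prop.pos t
  calc ‖f p / (((p : ℂ) ^ s + f p) * ((p : ℂ) ^ t - 1))‖
      ≤ 1 / ((cs * ‖(p : ℂ) ^ s‖) * (ct * ‖(p : ℂ) ^ t‖)) := by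
        rw [norm_div, norm_mul]
        gcongr
        exact hf p
    _ = (cs * ct)⁻¹ * ‖(p : ℂ) ^ (-(s + t))‖ := by
        rw [cpow_neg, cpow_add _ _ hp, norm_inv, norm_mul, mul_mul_mul_comm, one_div, mul_inv]

lemma baseFactor_mul_inv_one_add (p : Nat.Primes) (hf : ‖f p‖ ≤ 1) (hs : 0 < s.re)
    (ht : 0 < t.re) :
    baseFactor f s t p * (1 + f p * (p : ℂ) ^ (-(s + t)))⁻¹ = firstErecFactor f s t p := by
  have hp : (p : ℂ) ≠ 0 := mod_cast p.prop.ne_zero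
  have hps : (p : ℂ) ^ s + f p ≠ 0 := prime_cpow_add_ne_zero p hs hf
  have hpt : (p : ℂ) ^ t - 1 ≠ 0 := by
    rw [sub_eq_add_neg]
    exact prime_cpow_add_ne_zero p ht (by simp)
  have hpst : (p : ℂ) ^ s * (p : ℂ) ^ t + f p ≠ 0 := by
    rw [← cpow_add _ _ hp]
    exact prime_cpow_add_ne_zero p (by rw [add_re]; positivity) hf
  rw [baseFactor, firstErecFactor, cpow_neg, cpow_add _ _ hp]
  exact one_add_div_mul_inv_one_add (prime_cpow_ne_zero p s) (prime_cpow_ne_zero p t) hps hpt hpst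

lemma hasProd_firstErecFactor (hf : ∀ p : Nat.Primes, ‖f p‖ ≤ 1) (hs : 0 < s.re) (ht : 0 < t.re)
    (hst : 1 < (s + t).re) :
    HasProd (firstErecFactor f s t) ((∏' p, baseFactor f s t p) / onePlusProduct f (s + t)) := by
  rw [div_eq_mul_inv]
  exact ((multipliable_baseFactor hf hs ht hst).hasProd.mul
    (hasProd_inv_onePlusProduct hf hst)).congr_fun fun p ↦
      (baseFactor_mul_inv_one_add p (hf p) hs ht).symm

lemma Erec_one : Erec f s t 1 = ∏' p, firstErecFactor f s t p := by
  rw [Erec]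
  rfl

lemma Erec_succ {N : ℕ} (hN : 1 ≤ N) :
    Erec f s t (N + 1) =
      Erec f s t N * ∏' p : Nat.Primes, (1 + f p * (p : ℂ) ^ (-(s + (N + 1 : ℕ) * t)))⁻¹ := by
  obtain ⟨k, rfl⟩ := Nat.exists_eq_add_of_le' hN
  have hk : ((k + 1 + 1 : ℕ) : ℂ) = (k : ℕ) + 2 := by push_cast; ring
  rw [Erec, hk]

lemma one_lt_re_add_natCast_mul (ht : 0 ≤ t.re) (hst : 1 < (s + t).re) {j : ℕ} (hj : 1 ≤ j) :
    1 < (s + j * t).re := by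
  have hj' : (1 : ℝ) ≤ j := mod_cast hj
  simp only [add_re, mul_re, natCast_re, natCast_im, zero_mul, sub_zero] at hst ⊢
  nlinarith

lemma Erec_eq_div (hf : ∀ p : Nat.Primes, ‖f p‖ ≤ 1) (hs : 0 < s.re) (ht : 0 < t.re)
    (hst : 1 < (s + t).re) {N : ℕ} (hN : 1 ≤ N) :
    Erec f s t N =
      (∏' p, baseFactor f s t p) / ∏ j ∈ Finset.Icc 1 N, onePlusProduct f (s + j * t) := by
  induction N, hN using Nat.le_induction with
  | base =>
    rw [Erec_one, (hasProd_firstErecFactor hf hs ht hst).tprod_eq, Finset.Icc_self,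
      Finset.prod_singleton, Nat.cast_one, one_mul]
  | succ N hN ih =>
    have hre := one_lt_re_add_natCast_mul ht.le hst N.succ_pos
    rw [Erec_succ hN, ih, (hasProd_inv_onePlusProduct hf hre).tprod_eq,
      Finset.prod_Icc_succ_top (by lia), ← div_eq_mul_inv, div_div]

lemma tprod_baseFactor_eq_prod_mul_Erec (hf : ∀ p : Nat.Primes, ‖f p‖ ≤ 1) (hs : 0 < s.re)
    (ht : 0 < t.re) (hst : 1 < (s + t).re) {N : ℕ} (hN : 1 ≤ N) :
    ∏' p, baseFactor f s t p =
      (∏ j ∈ Finset.Icc 1 N, onePlusProduct f (s + j * t)) * Erec f s t N := by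
  have hne : ∏ j ∈ Finset.Icc 1 N, onePlusProduct f (s + j * t) ≠ 0 :=
    Finset.prod_ne_zero_iff.mpr fun j hj ↦ onePlusProduct_ne_zero hf <|
      one_lt_re_add_natCast_mul ht.le hst (Finset.mem_Icc.mp hj).1
  rw [Erec_eq_div hf hs ht hst hN, mul_div_cancel₀ _ hne]

end EulerProducts

section DirichletCharacters

variable {n : ℕ} (χ : DirichletCharacter ℂ n) {s t u : ℂ}

lemma dirichletCharacter_sq_mul_cpow_neg_two_mul (m : ℕ) (u : ℂ) :
    (χ ^ 2) m * (m : ℂ) ^ (-(2 * u)) = (χ m * (m : ℂ) ^ (-u)) ^ 2 := by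
  rw [MulChar.pow_apply' _ two_ne_zero, mul_pow, ← cpow_nat_mul, Nat.cast_two, mul_neg]

lemma onePlusProduct_dirichletCharacter [NeZero n] (hu : 1 < u.re) :
    onePlusProduct (fun m ↦ χ m) u = χ.LFunction u / (χ ^ 2).LFunction (2 * u) := by
  have hu2 : 1 < (2 * u).re := by
    have hre : (2 * u).re = 2 * u.re := by simp
    linarith
  rw [χ.LFunction_eq_LSeries hu, (χ ^ 2).LFunction_eq_LSeries hu2]
  refine HasProd.tprod_eq <| ((χ.LSeries_eulerProduct_hasProd hu).div₀
    ((χ ^ 2).LSeries_eulerProduct_hasProd hu2)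
    ((χ ^ 2).LSeries_ne_zero_of_one_lt_re hu2)).congr_fun fun p ↦ ?_
  have hz : 1 - χ p * (p : ℂ) ^ (-u) ≠ 0 := by
    rw [sub_eq_add_neg, ← neg_mul]
    exact one_add_mul_prime_cpow_neg_ne_zero p (zero_lt_one.trans hu)
      (by simpa only [norm_neg] using χ.norm_le_one p)
  rw [dirichletCharacter_sq_mul_cpow_neg_two_mul]
  field_simp
  ring

theorem statement16_general [NeZero n] (hs : 0 < s.re) (ht : 0 < t.re) (hst : 1 < (s + t).re)
    {N : ℕ} (hN : 1 ≤ N) :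
    Multipliable (baseFactor (fun m ↦ χ m) s t) ∧
    Multipliable (firstErecFactor (fun m ↦ χ m) s t) ∧
    (∀ M : ℕ, 1 ≤ M →
      Multipliable fun p : Nat.Primes ↦ (1 + χ p * (p : ℂ) ^ (-(s + M * t)))⁻¹) ∧
    ∏' p, baseFactor (fun m ↦ χ m) s t p =
      (∏ j ∈ Finset.Icc 1 N,
        χ.LFunction (s + j * t) / (χ ^ 2).LFunction (2 * s + 2 * j * t)) *
      Erec (fun m ↦ χ m) s t N := by
  have hχ (p : Nat.Primes) : ‖χ (p : ℕ)‖ ≤ 1 := χ.norm_le_one p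
  refine ⟨multipliable_baseFactor hχ hs ht hst, (hasProd_firstErecFactor hχ hs ht hst).multipliable,
    fun M hM ↦ (hasProd_inv_onePlusProduct (f := fun m ↦ χ m) hχ
      (one_lt_re_add_natCast_mul ht.le hst hM)).multipliable, ?_⟩
  have hL : ∀ j ∈ Finset.Icc 1 N, onePlusProduct (fun m ↦ χ m) (s + j * t) =
      χ.LFunction (s + j * t) / (χ ^ 2).LFunction (2 * s + 2 * j * t) := fun j hj ↦ by
    rw [onePlusProduct_dirichletCharacter χ
      (one_lt_re_add_natCast_mul ht.le hst (Finset.mem_Icc.mp hj).1), mul_add,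
      mul_assoc 2 (j : ℂ) t]
  rw [tprod_baseFactor_eq_prod_mul_Erec (f := fun m ↦ χ m) hχ hs ht hst hN,
    Finset.prod_congr rfl hL]

end DirichletCharacters

/-- the Euler-product identity
`∏_p (1 + χ(p)/((p^s+χ(p))(p^t-1))) = ∏_{j=1}^N L(s+jt,χ)/L(2s+2jt,χ²) · E_N(s,t;χ)`
for `Re s > 1`, `Re t > 1`, all products converging absolutely. -/
theorem statement16
    (n : ℕ) (hn : NeZero n) (χ : DirichletCharacter ℂ n)
    (s t : ℂ) (hs : 1 < s.re) (ht : 1 < t.re) (N : ℕ) (hN : 1 ≤ N) :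
    Multipliable (fun p : Nat.Primes =>
      (1 + χ ((p : ℕ) : ZMod n) /
        ((((p : ℕ) : ℂ) ^ s + χ ((p : ℕ) : ZMod n)) * (((p : ℕ) : ℂ) ^ t - 1)))) ∧
    Multipliable (fun p : Nat.Primes =>
      (1 + (χ ((p : ℕ) : ZMod n) * ((p : ℕ) : ℂ) ^ s
            - (χ ((p : ℕ) : ZMod n)) ^ 2 * ((p : ℕ) : ℂ) ^ t + (χ ((p : ℕ) : ZMod n)) ^ 2) /
        ((((p : ℕ) : ℂ) ^ (s + t) + χ ((p : ℕ) : ZMod n)) *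
          (((p : ℕ) : ℂ) ^ s + χ ((p : ℕ) : ZMod n)) * (((p : ℕ) : ℂ) ^ t - 1)))) ∧
    (∀ M : ℕ, 2 ≤ M → M ≤ N → Multipliable (fun p : Nat.Primes =>
      (1 + χ ((p : ℕ) : ZMod n) * ((p : ℕ) : ℂ) ^ (-(s + (M : ℂ) * t)))⁻¹)) ∧
    (∏' p : Nat.Primes,
      (1 + χ ((p : ℕ) : ZMod n) /
        ((((p : ℕ) : ℂ) ^ s + χ ((p : ℕ) : ZMod n)) * (((p : ℕ) : ℂ) ^ t - 1)))) =
      (∏ j ∈ Finset.Icc 1 N,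
        χ.LFunction (s + (j : ℂ) * t) / (χ ^ 2).LFunction (2 * s + 2 * (j : ℂ) * t)) *
      Erec (fun m => χ (m : ZMod n)) s t N := by
  obtain ⟨hbase, hfirst, hinv, heq⟩ := statement16_general χ (zero_lt_one.trans hs)
    (zero_lt_one.trans ht) (by rw [add_re]; linarith) hN
  exact ⟨hbase, hfirst, fun M hM _ ↦ hinv M (one_le_two.trans hM), heq⟩
end
end
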